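/- arXiv:2507.01534 — 2 statements merged into one kernel-verified Lean document; each statement's English description precedes it below -/
import Mathlib

section
/- Let V be a finite-dimensional complex inner product space and let (ξ_p) be a sequence of self-adjoint endomorphisms of V converging to an endomorphism ξ (necessarily self-adjoint). Then there exist a strictly increasing sequence of indices (p_k), a sequence of unitary operators u_k on V converging to the identity, and a sequence of self-adjoint endomorphisms η_k of V, each commuting with ξ and converging to ξ, such that ξ_{p_k} = u_k ∘ η_k ∘ u_k⁻¹ for every k. -/
open scoped Topology

/-!
Choose unitaries `w_p` such that the operators `D_p = w_p* ξ_p w_p` are all diagonal in one fixed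
orthonormal basis, so that they commute with one another. By compactness of the unitary group,
`w_p → W` along a subsequence; hence `D_p → W* ξ W`, and this limit commutes with every `D_p`.
Conjugating back by `W` gives `η_p = W D_p W*`, which commutes with `ξ`, and `u_p = w_p W*`.
-/

open Filter Unitary

theorem isCompact_unitary {A : Type*} [NormedRing A] [StarRing A] [CStarRing A] [ProperSpace A] :
    IsCompact (unitary A : Set A) := by
  refine (isCompact_closedBall (0 : A) ‖(1 : A)‖).of_isClosed_subset isClosed_unitary fun u hu ↦ ?_
  rw [mem_closedBall_zero_iff]
  simpa using (CStarRing.norm_coe_unitary_mul ⟨u, hu⟩ (1 : A)).le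

section Conjugation

variable {S A : Type*} [Semiring A] [StarMul A] [SMul S A] [IsScalarTower S A A]
  [SMulCommClass S A A] [TopologicalSpace A] [ContinuousMul A] [ContinuousStar A]

theorem tendsto_conjStarAlgAut_apply {ι : Type*} {l : Filter ι} {u : ι → unitary A} {v : unitary A}
    {x : ι → A} {a : A} (hu : Tendsto u l (𝓝 v)) (hx : Tendsto x l (𝓝 a)) :
    Tendsto (fun i ↦ conjStarAlgAut S A (u i) (x i)) l (𝓝 (conjStarAlgAut S A v a)) := by
  have hu' : Tendsto (fun i ↦ (u i : A)) l (𝓝 v) := (continuous_subtype_val.tendsto v).comp hu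
  exact (hu'.mul hx).mul hu'.star

theorem exists_subseq_conjStarAlgAut_commute_of_commute [T2Space A] [SeqCompactSpace (unitary A)]
    {x : ℕ → A} {a : A} (hx : Tendsto x atTop (𝓝 a)) (w : ℕ → unitary A)
    (hw : ∀ m n, Commute ((conjStarAlgAut S A (w m)).symm (x m))
      ((conjStarAlgAut S A (w n)).symm (x n))) :
    ∃ p : ℕ → ℕ, StrictMono p ∧ ∃ u : ℕ → unitary A, Tendsto u atTop (𝓝 1) ∧
      ∃ y : ℕ → A, (∀ k, Commute (y k) a) ∧ Tendsto y atTop (𝓝 a) ∧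
        ∀ k, x (p k) = conjStarAlgAut S A (u k) (y k) := by
  obtain ⟨W, p, hp, hW⟩ := SeqCompactSpace.tendsto_subseq w
  let D (k : ℕ) : A := (conjStarAlgAut S A (w (p k))).symm (x (p k))
  have hD : Tendsto D atTop (𝓝 ((conjStarAlgAut S A W).symm a)) := by
    simpa only [D, conjStarAlgAut_symm, Function.comp_apply] using
      tendsto_conjStarAlgAut_apply hW.star (hx.comp hp.tendsto_atTop)
  have hD_comm (k : ℕ) : Commute (D k) ((conjStarAlgAut S A W).symm a) :=
    tendsto_nhds_unique (hD.const_mul (D k)) <|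
      (hD.mul_const (D k)).congr fun l ↦ (hw (p l) (p k)).eq
  refine ⟨p, hp, fun k ↦ w (p k) * star W, ?_, fun k ↦ conjStarAlgAut S A W (D k),
    fun k ↦ ?_, ?_, fun k ↦ ?_⟩
  · simpa only [mul_star_self, Function.comp_apply] using hW.mul_const (star W)
  · simpa only [StarAlgEquiv.apply_symm_apply] using (hD_comm k).map (conjStarAlgAut S A W)
  · simpa only [StarAlgEquiv.apply_symm_apply] using
      tendsto_conjStarAlgAut_apply (S := S) (tendsto_const_nhds (x := W)) hD
  · rw [conjStarAlgAut_mul_apply, ← conjStarAlgAut_symm, StarAlgEquiv.symm_apply_apply,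
      StarAlgEquiv.apply_symm_apply]

end Conjugation

theorem commute_of_forall_basis_apply_eq_smul {ι R M : Type*} [CommSemiring R] [AddCommMonoid M]
    [Module R M] (b : Module.Basis ι R M) {f g : Module.End R M}
    (hf : ∀ i, ∃ c : R, f (b i) = c • b i) (hg : ∀ i, ∃ c : R, g (b i) = c • b i) :
    Commute f g := by
  refine b.ext fun i ↦ ?_
  obtain ⟨c, hc⟩ := hf i
  obtain ⟨d, hd⟩ := hg i
  simp only [Module.End.mul_apply, hc, hd, map_smul, smul_comm c d]

section SelfAdjoint

variable {𝕜 V : Type*} [RCLike 𝕜] [NormedAddCommGroup V] [InnerProductSpace 𝕜 V]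
  [FiniteDimensional 𝕜 V]

local instance : CompleteSpace V := FiniteDimensional.complete 𝕜 V

theorem exists_unitary_conjStarAlgAut_symm_apply_eq_smul {ι : Type*} [Fintype ι]
    (b : OrthonormalBasis ι 𝕜 V) {T : V →L[𝕜] V} (hT : IsSelfAdjoint T) :
    ∃ w : unitary (V →L[𝕜] V),
      ∀ i, ∃ c : 𝕜, (conjStarAlgAut 𝕜 (V →L[𝕜] V) w).symm T (b i) = c • b i := by
  have hT' : (T : V →ₗ[𝕜] V).IsSymmetric := ContinuousLinearMap.isSelfAdjoint_iff_isSymmetric.mp hT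
  have hn : Module.finrank 𝕜 V = Fintype.card ι := Module.finrank_eq_card_basis b.toBasis
  let σ : ι ≃ Fin (Fintype.card ι) := Fintype.equivFin ι
  let L : V ≃ₗᵢ[𝕜] V := b.equiv (hT'.eigenvectorBasis hn) σ
  refine ⟨linearIsometryEquiv.symm L, fun i ↦ ⟨hT'.eigenvalues hn (σ i), ?_⟩⟩
  have hL : L (b i) = hT'.eigenvectorBasis hn (σ i) := b.equiv_apply_basis _ _ i
  have hTL : T (L (b i)) = (hT'.eigenvalues hn (σ i) : 𝕜) • L (b i) := by
    rw [hL]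
    exact hT'.apply_eigenvectorBasis hn (σ i)
  rw [conjStarAlgAut_symm_unitaryLinearIsometryEquiv,
    LinearIsometryEquiv.symm_conjStarAlgEquiv_apply_apply, hTL, map_smul, L.symm_apply_apply]

theorem exists_unitary_commute_conjStarAlgAut_symm {κ : Type*} {T : κ → V →L[𝕜] V}
    (hT : ∀ k, IsSelfAdjoint (T k)) :
    ∃ w : κ → unitary (V →L[𝕜] V), ∀ k l,
      Commute ((conjStarAlgAut 𝕜 (V →L[𝕜] V) (w k)).symm (T k))
        ((conjStarAlgAut 𝕜 (V →L[𝕜] V) (w l)).symm (T l)) := by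
  let b := stdOrthonormalBasis 𝕜 V
  choose w hw using fun k ↦ exists_unitary_conjStarAlgAut_symm_apply_eq_smul b (hT k)
  have hw' (k : κ) (i : Fin (Module.finrank 𝕜 V)) : ∃ c : 𝕜,
      ((conjStarAlgAut 𝕜 (V →L[𝕜] V) (w k)).symm (T k) : V →ₗ[𝕜] V) (b.toBasis i)
        = c • b.toBasis i := by
    rw [b.coe_toBasis]
    exact hw k i
  exact ⟨w, fun k l ↦ .of_map (f := ContinuousLinearMap.toLinearMapRingHom)
    ContinuousLinearMap.coe_injective <|
      commute_of_forall_basis_apply_eq_smul b.toBasis (hw' k) (hw' l)⟩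

theorem exists_subseq_unitary_conj_commuting_general
    (ξseq : ℕ → V →L[𝕜] V) (hsa : ∀ p, IsSelfAdjoint (ξseq p))
    (ξ : V →L[𝕜] V) (hconv : Tendsto ξseq atTop (𝓝 ξ)) :
    ∃ p : ℕ → ℕ, StrictMono p ∧
    ∃ u : ℕ → V →L[𝕜] V, (∀ k, u k ∈ unitary (V →L[𝕜] V)) ∧ Tendsto u atTop (𝓝 1) ∧
    ∃ η : ℕ → V →L[𝕜] V, (∀ k, IsSelfAdjoint (η k)) ∧ (∀ k, Commute (η k) ξ) ∧
      Tendsto η atTop (𝓝 ξ) ∧ ∀ k, ξseq (p k) = u k * η k * star (u k) := by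
  have : ProperSpace (V →L[𝕜] V) := FiniteDimensional.proper 𝕜 _
  have : CompactSpace (unitary (V →L[𝕜] V)) := isCompact_iff_compactSpace.mp isCompact_unitary
  obtain ⟨w, hw⟩ := exists_unitary_commute_conjStarAlgAut_symm hsa
  obtain ⟨p, hp, u, hu, η, hηξ, hη, hξη⟩ :=
    exists_subseq_conjStarAlgAut_commute_of_commute hconv w hw
  have hη_sa (k : ℕ) : IsSelfAdjoint (η k) := by
    rw [← (conjStarAlgAut 𝕜 _ (u k)).symm_apply_apply (η k), ← hξη]
    exact (hsa (p k)).map (conjStarAlgAut 𝕜 _ (u k)).symm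
  exact ⟨p, hp, fun k ↦ u k, fun k ↦ (u k).2, (continuous_subtype_val.tendsto 1).comp hu,
    η, hη_sa, hηξ, hη, hξη⟩

end SelfAdjoint

theorem exists_subseq_unitary_conj_commuting
    {V : Type*} [NormedAddCommGroup V] [InnerProductSpace ℂ V] [FiniteDimensional ℂ V]
    (ξseq : ℕ → V →L[ℂ] V) (hsa : ∀ p, IsSelfAdjoint (ξseq p))
    (ξ : V →L[ℂ] V) (hconv : Filter.Tendsto ξseq Filter.atTop (𝓝 ξ)) :
    ∃ p : ℕ → ℕ, StrictMono p ∧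
    ∃ u : ℕ → V →L[ℂ] V, (∀ k, u k ∈ unitary (V →L[ℂ] V)) ∧
      Filter.Tendsto u Filter.atTop (𝓝 1) ∧
    ∃ η : ℕ → V →L[ℂ] V, (∀ k, IsSelfAdjoint (η k)) ∧ (∀ k, Commute (η k) ξ) ∧
      Filter.Tendsto η Filter.atTop (𝓝 ξ) ∧
      ∀ k, ξseq (p k) = u k * η k * star (u k) :=
  exists_subseq_unitary_conj_commuting_general ξseq hsa ξ hconv
end

section
/- (Łojasiewicz gradient inequality.) Let E be a finite-dimensional real inner product space, U ⊆ E an open set, and g : E → ℝ a function that is real-analytic on U. Let x ∈ U be a critical point of g, i.e., the gradient of g vanishes at x. Then there exist a neighborhood V of x with V ⊆ U and constants a > 0 and θ with 1/2 ≤ θ < 1 such that for all y ∈ V, a · |g(x) − g(y)|^θ ≤ ‖∇g(y)‖. -/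
open scoped Topology

/-!
If no exponent works for an analytic `f` with `f 0 = 0`, there is an ultrafilter `L` converging to
the origin along which `‖f'‖ ^ (n + 1) < |f| ^ n` for every `n`. In the ultrapower of `ℝ` along
`L`, let `O` be the valuation ring of the elements all of whose powers are at most `|f|⁻¹`. It
contains the values of the analytic germs and, by the choice of `L`, those of `∂ᵥf / f`, while `f`
is a nonunit of `O` that divides a power of every nonunit.

Let `p` be the ideal of the germs whose value in `O` is not a unit. By Weierstrass division, every
germ is, modulo any power of some finitely generated `I ≤ p`, a polynomial in coordinates `x`
whose coefficients range over a ring that meets `p` trivially and is killed by the `∂ⱼ`. Modulo a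
high power of `I`, `f` is thus a polynomial `G` in `x`, and `f² ∣ f - G` in `O`, likewise for the
derivatives. Hence the value `g` of `G` divides the values of all `∂ⱼG`, and the coefficients
generate a field `F` inside `O`; the contradiction is that such a `g ≠ 0` must be a unit.

Indeed, otherwise the `F`-algebra generated by `x` and the quotients `∂ⱼG / g` maps to a discrete
valuation ring in which `g` has some order `a ≥ 1`: localise its normalisation at a minimal prime
over `g`. Its quotient by the power `a + 1` of the maximal ideal is `κ[t]/(t ^ (a + 1))` with `F`
contained in `κ`, and there `dg/dt` has order `a - 1`, whereas `∑ ∂ⱼG · dxⱼ/dt` is divisible by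
`t ^ a`.

Weierstrass division by `h (w, s)` comes from Toeplitz operators. Substituting a small shift `M`
with left inverse `B` for `s` turns `h` and the dividend `r` into operators `H w` and `R w`. If
`h (0, s)` has order `b`, then `B ^ b * H w` is invertible near `w = 0`, the quotient is read off
from `T = (B ^ b * H w)⁻¹ * B ^ b * R w`, and `B ^ b` kills the remainder `R w - H w * T`.
-/

/-! ### Polynomials whose gradient is divisible by their value -/

universe u

theorem formallySmooth_of_charZero (F K : Type*) [Field F] [CharZero F] [Field K] [Algebra F K] :
    Algebra.FormallySmooth F K := by
  obtain ⟨s, hs⟩ := exists_isTranscendenceBasis F K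
  have := hs.isAlgebraic_field
  exact .of_algebraicIndependent_of_isSeparable hs.1

theorem derivation_eval₂ {σ R S A M : Type*} [Fintype σ] [CommSemiring R] [CommSemiring S]
    [CommSemiring A] [Algebra R A] [AddCommMonoid M] [Module A M] [Module R M]
    (D : Derivation R A M) {φ : S →+* A} (hφ : ∀ s, D (φ s) = 0) (x : σ → A)
    (G : MvPolynomial σ S) :
    D (MvPolynomial.eval₂ φ x G) =
      ∑ j, MvPolynomial.eval₂ φ x (MvPolynomial.pderiv j G) • D (x j) := by
  classical
  induction G using MvPolynomial.induction_on with
  | C a => simp [hφ]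
  | add p q hp hq => simp [hp, hq, add_smul, Finset.sum_add_distrib]
  | mul_X p i hp =>
    simp [hp, add_smul, Finset.sum_add_distrib, MvPolynomial.pderiv_X, mul_smul, Finset.smul_sum,
      Pi.single_apply, apply_ite, ite_smul]

section DiscreteValuationRing

open IsLocalRing Polynomial

theorem exists_algHom_residueField (F R : Type*) [Field F] [CharZero F] [CommRing R]
    [IsLocalRing R] [Algebra F R] {n : ℕ} (hn : n ≠ 0) :
    ∃ σ : ResidueField R →ₐ[F] R ⧸ maximalIdeal R ^ n, ∀ (z : ResidueField R) (r : R),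
      σ z = Ideal.Quotient.mk _ r → residue R r = z := by
  have := formallySmooth_of_charZero F (ResidueField R)
  let π : R ⧸ maximalIdeal R ^ n →ₐ[F] ResidueField R :=
    Ideal.Quotient.factorₐ F (Ideal.pow_le_self hn)
  have hπ : Function.Surjective π := Ideal.Quotient.factor_surjective (Ideal.pow_le_self hn)
  have hker : IsNilpotent (RingHom.ker (π : R ⧸ maximalIdeal R ^ n →+* ResidueField R)) := by
    refine ⟨n, ?_⟩
    have : RingHom.ker (π : R ⧸ maximalIdeal R ^ n →+* ResidueField R) =
      (maximalIdeal R).map (Ideal.Quotient.mk _) :=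
      Ideal.Quotient.factor_ker (Ideal.pow_le_self hn)
    rw [this, ← Ideal.map_pow, Ideal.map_quotient_self, Ideal.zero_eq_bot]
  refine ⟨Algebra.FormallySmooth.liftOfSurjective (.id F _) π hπ hker, fun z r h ↦ ?_⟩
  have hz := Algebra.FormallySmooth.liftOfSurjective_apply (.id F _) π hπ hker z
  rwa [h] at hz

section Nilpotent

variable {k B : Type*} [Field k] [CommRing B] [Algebra k B] {b : B}

theorem isUnit_aeval_of_isNilpotent (hb : IsNilpotent b) {p : k[X]} (hp : ¬X ∣ p) :
    IsUnit (aeval b p) := by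
  rw [← divX_mul_X_add p, map_add, map_mul, aeval_X, aeval_C]
  refine ((Commute.all _ _).isNilpotent_mul_left hb).isUnit_add_right_of_commute ?_
    (Commute.all _ _)
  exact (IsUnit.mk0 _ (by rwa [X_dvd_iff] at hp)).map _

theorem X_pow_dvd_of_aeval_eq_zero (hb : IsNilpotent b) {n : ℕ} (hn : ∀ i, b ^ i = 0 → n ≤ i)
    {p : k[X]} (hp : aeval b p = 0) : X ^ n ∣ p := by
  rcases eq_or_ne p 0 with rfl | hp0
  · exact dvd_zero _
  obtain ⟨q, hq, hXq⟩ := exists_eq_pow_rootMultiplicity_mul_and_not_dvd p hp0 0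
  rw [C_0, sub_zero] at hq hXq
  rw [hq, map_mul, map_pow, aeval_X, (isUnit_aeval_of_isNilpotent hb hXq).mul_left_eq_zero] at hp
  rw [hq]
  exact (pow_dvd_pow X (hn _ hp)).mul_right q

theorem aeval_surjective_of_isNilpotent (hb : IsNilpotent b)
    (h : ∀ y : B, ∃ z : k, b ∣ y - algebraMap k B z) :
    Function.Surjective (aeval b : k[X] →ₐ[k] B) := by
  have approx (n : ℕ) (y : B) : ∃ p : k[X], b ^ n ∣ y - aeval b p := by
    induction n generalizing y with
    | zero => exact ⟨0, by simp⟩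
    | succ n ih =>
      obtain ⟨z, c, hc⟩ := h y
      obtain ⟨p, d, hd⟩ := ih c
      refine ⟨C z + X * p, d, ?_⟩
      simp only [map_add, map_mul, aeval_X, aeval_C]
      linear_combination hc + b * hd
  obtain ⟨n, hn⟩ := hb
  intro y
  obtain ⟨p, hp⟩ := approx n y
  rw [hn, zero_dvd_iff, sub_eq_zero] at hp
  exact ⟨p, hp.symm⟩

end Nilpotent

theorem X_dvd_of_X_pow_dvd_derivative {k : Type*} [Field k] [CharZero k] {a : ℕ} (ha : a ≠ 0)
    {p q : k[X]} (hpq : X ^ (a + 1) ∣ p - q * X ^ a) (hp : X ^ a ∣ derivative p) : X ∣ q := by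
  obtain ⟨n, rfl⟩ := Nat.exists_eq_succ_of_ne_zero ha
  obtain ⟨r, hr⟩ := hpq
  obtain ⟨s, hs⟩ := hp
  have hp' : derivative p = derivative (X ^ (n + 2) * r + q * X ^ (n + 1)) :=
    congrArg derivative (sub_eq_iff_eq_add.mp hr)
  have hX : X * (s - derivative q - C (n + 2 : k) * r - X * derivative r) =
      C ((n + 1 : ℕ) : k) * q := by
    refine mul_left_cancel₀ (pow_ne_zero n (X_ne_zero (R := k))) ?_
    simp only [derivative_add, derivative_mul, derivative_X_pow, hs, Nat.succ_eq_add_one] at hp'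
    push_cast at hp' ⊢
    linear_combination hp'
  have hunit : IsUnit (C ((n + 1 : ℕ) : k)) :=
    isUnit_C.mpr (IsUnit.mk0 _ (Nat.cast_ne_zero.mpr n.succ_ne_zero))
  exact hunit.dvd_mul_left.mp ⟨_, hX.symm⟩

/-- A truncated form of the isomorphism of the completion of `R` with `κ⟦X⟧`. -/
theorem exists_algHom_polynomial_residueField (F : Type*) {R : Type*} [Field F] [CharZero F]
    [CommRing R] [IsDomain R] [IsDiscreteValuationRing R] [Algebra F R] {ϖ : R}
    (hϖ : Irreducible ϖ) {n : ℕ} (hn : n ≠ 0) :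
    ∃ ψ : (ResidueField R)[X] →ₐ[F] R ⧸ maximalIdeal R ^ n, Function.Surjective ψ ∧
      ψ X = Ideal.Quotient.mk _ ϖ ∧ ∀ p, ψ p = 0 → X ^ n ∣ p := by
  obtain ⟨σ, hσ⟩ := exists_algHom_residueField F R hn
  let _ : Algebra (ResidueField R) (R ⧸ maximalIdeal R ^ n) := σ.toAlgebra
  have : IsScalarTower F (ResidueField R) (R ⧸ maximalIdeal R ^ n) :=
    .of_algebraMap_eq' σ.comp_algebraMap.symm
  have hpow (i : ℕ) : (Ideal.Quotient.mk (maximalIdeal R ^ n) ϖ) ^ i = 0 ↔ n ≤ i := by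
    rw [← map_pow, Ideal.Quotient.eq_zero_iff_mem, hϖ.maximalIdeal_eq, Ideal.span_singleton_pow,
      Ideal.mem_span_singleton, pow_dvd_pow_iff hϖ.ne_zero hϖ.not_isUnit]
  have hnil : IsNilpotent (Ideal.Quotient.mk (maximalIdeal R ^ n) ϖ) := ⟨n, (hpow n).mpr le_rfl⟩
  refine ⟨(aeval (Ideal.Quotient.mk _ ϖ)).restrictScalars F,
    aeval_surjective_of_isNilpotent hnil fun y ↦ ?_, aeval_X _,
    fun p hp ↦ X_pow_dvd_of_aeval_eq_zero hnil (fun i ↦ (hpow i).mp) hp⟩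
  obtain ⟨r, rfl⟩ := Ideal.Quotient.mk_surjective y
  obtain ⟨r', hr'⟩ := Ideal.Quotient.mk_surjective (σ (residue R r))
  refine ⟨residue R r, ?_⟩
  change _ ∣ _ - σ _
  rw [← hr', ← map_sub]
  refine map_dvd _ ?_
  rw [← Ideal.mem_span_singleton, ← hϖ.maximalIdeal_eq, ← ker_residue, RingHom.mem_ker, map_sub,
    hσ _ _ hr'.symm, sub_self]

theorem isUnit_aeval_of_dvd_aeval_pderiv_of_isDiscreteValuationRing {σ F R : Type*} [Finite σ]
    [Field F] [CharZero F] [CommRing R] [IsDomain R] [IsDiscreteValuationRing R] [Algebra F R]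
    {x : σ → R} {G : MvPolynomial σ F} (hG : MvPolynomial.aeval x G ≠ 0)
    (hdvd : ∀ j, MvPolynomial.aeval x G ∣ MvPolynomial.aeval x (MvPolynomial.pderiv j G)) :
    IsUnit (MvPolynomial.aeval x G) := by
  have := Fintype.ofFinite σ
  obtain ⟨ϖ, hϖ⟩ := IsDiscreteValuationRing.exists_irreducible R
  obtain ⟨a, u, hu⟩ := IsDiscreteValuationRing.eq_unit_mul_pow_irreducible hG hϖ
  rcases eq_or_ne a 0 with rfl | ha
  · simp [hu]
  exfalso
  obtain ⟨ψ, hψ, hψX, hker⟩ := exists_algHom_polynomial_residueField F hϖ a.succ_ne_zero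
  have hlift (r : R) : ∃ p, ψ p = Ideal.Quotient.mkₐ F _ r := hψ _
  choose L hL using hlift
  have happrox {H : MvPolynomial σ F} {r : R} (h : MvPolynomial.aeval x H = r * ϖ ^ a) :
      X ^ (a + 1) ∣ MvPolynomial.aeval (fun j ↦ L (x j)) H - L r * X ^ a := hker _ <| by
    simp only [map_sub, map_mul, map_pow, MvPolynomial.comp_aeval_apply, hL, hψX]
    rw [← MvPolynomial.comp_aeval_apply, h, map_mul, map_pow]
    exact sub_self _
  have hderiv : X ^ a ∣ derivative (MvPolynomial.aeval (fun j ↦ L (x j)) G) := by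
    change X ^ a ∣ derivative' (R := ResidueField R) _
    rw [MvPolynomial.aeval_def, derivation_eval₂ _ fun _ ↦ derivative_C]
    refine Finset.dvd_sum fun j _ ↦ Dvd.dvd.mul_right ?_ _
    obtain ⟨c, hc⟩ := hdvd j
    rw [hu, mul_right_comm] at hc
    exact (dvd_sub_left (dvd_mul_left _ _)).mp ((pow_dvd_pow X a.le_succ).trans (happrox hc))
  have := charZero_of_injective_algebraMap (algebraMap F (ResidueField R)).injective
  have hXu : X ∣ L u := X_dvd_of_X_pow_dvd_derivative ha (happrox hu) hderiv
  have hunit : X ^ (a + 1) ∣ L u * L ↑u⁻¹ - 1 := hker _ <| by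
    rw [map_sub, map_mul, hL, hL, ← map_mul, Units.mul_inv, map_one, map_one, sub_self]
  have hX1 : X ∣ (1 : (ResidueField R)[X]) :=
    (dvd_sub_right (hXu.mul_right _)).mp ((dvd_pow_self X a.succ_ne_zero).trans hunit)
  exact not_isUnit_X (isUnit_of_dvd_one hX1)

end DiscreteValuationRing

theorem isNoetherianRing_integralClosure_of_finiteType (F T L : Type*) [Field F] [CharZero F]
    [CommRing T] [Algebra F T] [Algebra.FiniteType F T] [Field L] [Algebra T L]
    [IsFractionRing T L] : IsNoetherianRing (integralClosure T L) := by
  have : IsDomain T := (IsFractionRing.injective T L).isDomain (algebraMap T L)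
  obtain ⟨s, ι, hι, hint⟩ := exists_integral_inj_algHom_of_fg F T
  let A := MvPolynomial (Fin s) F
  let _ : Algebra A T := ι.toAlgebra
  let _ : Algebra A L := ((algebraMap T L).comp ι.toRingHom).toAlgebra
  have : IsScalarTower F A T := .of_algebraMap_eq' ι.comp_algebraMap.symm
  have : IsScalarTower A T L := .of_algebraMap_eq' rfl
  have : FaithfulSMul A T := (faithfulSMul_iff_algebraMap_injective _ _).mpr hι
  have : FaithfulSMul A L := .trans A T L
  have : Algebra.IsIntegral A T := ⟨hint⟩
  have : Module.Finite A T :=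
    have : Algebra.FiniteType A T := .of_restrictScalars_finiteType F A T
    Algebra.IsIntegral.finite
  let _ : Algebra (FractionRing A) L := FractionRing.liftAlgebra A L
  have : FiniteDimensional (FractionRing A) L :=
    .of_isLocalization A T (nonZeroDivisors A)
  have : IsIntegralClosure (integralClosure T L) A L :=
    ⟨Subtype.val_injective, fun {x} ↦ ⟨fun hx ↦ ⟨⟨x, hx.tower_top⟩, rfl⟩, by
      rintro ⟨y, rfl⟩
      exact isIntegral_trans (R := A) _ y.2⟩⟩
  exact IsIntegralClosure.isNoetherianRing A (FractionRing A) L _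

theorem isDiscreteValuationRing_of_mem_minimalPrimes_span_singleton {S : Type*} [CommRing S]
    [IsDomain S] [IsNoetherianRing S] [IsIntegrallyClosed S] {g : S} (hg : g ≠ 0) {P : Ideal S}
    [P.IsPrime] (hP : P ∈ (Ideal.span {g}).minimalPrimes) :
    IsDiscreteValuationRing (Localization.AtPrime P) := by
  have hPbot : P ≠ ⊥ := fun h ↦ hg <| by
    simpa [h] using hP.1.2 (Ideal.mem_span_singleton_self g)
  have : Ring.KrullDimLE 1 (Localization.AtPrime P) := by
    rw [Ring.krullDimLE_iff, IsLocalization.AtPrime.ringKrullDim_eq_height P]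
    exact_mod_cast Ideal.height_le_one_of_isPrincipal_of_mem_minimalPrimes _ P hP
  have : IsIntegrallyClosed (Localization.AtPrime P) :=
    isIntegrallyClosed_of_isLocalization _ P.primeCompl P.primeCompl_le_nonZeroDivisors
  have : Ring.DimensionLEOne (Localization.AtPrime P) :=
    ⟨fun hp hprime ↦ Ring.krullDimLE_one_iff_of_noZeroDivisors.mp inferInstance _ hp hprime⟩
  have : IsDedekindRing (Localization.AtPrime P) := { }
  have : IsDedekindDomain (Localization.AtPrime P) := { }
  exact ((IsDiscreteValuationRing.TFAE (Localization.AtPrime P)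
    (IsLocalization.AtPrime.not_isField S hPbot _)).out 2 0).mp this

theorem exists_isDiscreteValuationRing_localization_of_not_isUnit {S : Type*} [CommRing S]
    [IsDomain S] [IsNoetherianRing S] [IsIntegrallyClosed S] {g : S} (hg0 : g ≠ 0)
    (hg : ¬IsUnit g) :
    ∃ (P : Ideal S) (_ : P.IsPrime), IsDiscreteValuationRing (Localization.AtPrime P) ∧ g ∈ P := by
  obtain ⟨M, hM, hgM⟩ := exists_max_ideal_of_mem_nonunits hg
  obtain ⟨P, hP, -⟩ := Ideal.exists_minimalPrimes_le ((Ideal.span_singleton_le_iff_mem M).mpr hgM)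
  have : P.IsPrime := hP.1.1
  exact ⟨P, this, isDiscreteValuationRing_of_mem_minimalPrimes_span_singleton hg0 hP,
    hP.1.2 (Ideal.mem_span_singleton_self g)⟩

theorem exists_algHom_isDiscreteValuationRing {F : Type*} {T : Type u} [Field F] [CharZero F]
    [CommRing T] [IsDomain T] [Algebra F T] [Algebra.FiniteType F T] {g : T} (hg0 : g ≠ 0)
    (hg : ¬IsUnit g) :
    ∃ (R : Type u) (_ : CommRing R) (_ : IsDomain R) (_ : IsDiscreteValuationRing R)
      (_ : Algebra F R) (φ : T →ₐ[F] R), φ g ≠ 0 ∧ ¬IsUnit (φ g) := by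
  have := isNoetherianRing_integralClosure_of_finiteType F T (FractionRing T)
  have : IsIntegrallyClosed (integralClosure T (FractionRing T)) :=
    integralClosure.isIntegrallyClosedOfFiniteExtension (FractionRing T)
  obtain ⟨P, _, _, hgP⟩ := exists_isDiscreteValuationRing_localization_of_not_isUnit
    (S := integralClosure T (FractionRing T)) (g := algebraMap T _ g) (by simpa using hg0)
    fun h ↦ hg (isUnit_of_map_unit _ g h)
  refine ⟨Localization.AtPrime P, inferInstance, inferInstance, inferInstance, inferInstance,
    (Algebra.ofId T (Localization.AtPrime P)).restrictScalars F, ?_, ?_⟩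
  · have := FaithfulSMul.algebraMap_injective (integralClosure T (FractionRing T))
      (Localization.AtPrime P)
    exact (map_ne_zero_iff _ this).mpr (by simpa using hg0)
  · exact mt (IsLocalization.AtPrime.isUnit_to_map_iff _ P _).mp (not_not.mpr hgP)

theorem isUnit_aeval_of_dvd_aeval_pderiv {σ F T : Type*} [Finite σ] [Field F] [CharZero F]
    [CommRing T] [IsDomain T] [Algebra F T] {x : σ → T} {G : MvPolynomial σ F}
    (hG : MvPolynomial.aeval x G ≠ 0)
    (hdvd : ∀ j, MvPolynomial.aeval x G ∣ MvPolynomial.aeval x (MvPolynomial.pderiv j G)) :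
    IsUnit (MvPolynomial.aeval x G) := by
  choose c hc using hdvd
  let A := Algebra.adjoin F (Set.range x ∪ Set.range c)
  have : Algebra.FiniteType F A :=
    .adjoin_of_finite ((Set.finite_range x).union (Set.finite_range c))
  let y (j : σ) : A := ⟨x j, Algebra.subset_adjoin (.inl ⟨j, rfl⟩)⟩
  let d (j : σ) : A := ⟨c j, Algebra.subset_adjoin (.inr ⟨j, rfl⟩)⟩
  have hy (H : MvPolynomial σ F) : (MvPolynomial.aeval y H : A) = MvPolynomial.aeval x H :=
    MvPolynomial.comp_aeval_apply _ A.val _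
  have hGA : MvPolynomial.aeval y G ≠ 0 := fun h ↦ hG (by rw [← hy, h, ZeroMemClass.coe_zero])
  rw [← hy]
  refine IsUnit.map A.val (of_not_not fun hunit ↦ ?_)
  obtain ⟨R, _, _, _, _, φ, hφ0, hφ⟩ := exists_algHom_isDiscreteValuationRing (F := F) hGA hunit
  refine hφ ?_
  rw [MvPolynomial.comp_aeval_apply] at hφ0 ⊢
  refine isUnit_aeval_of_dvd_aeval_pderiv_of_isDiscreteValuationRing hφ0 fun j ↦ ⟨φ (d j), ?_⟩
  rw [← MvPolynomial.comp_aeval_apply, ← MvPolynomial.comp_aeval_apply, ← map_mul]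
  exact congrArg φ (Subtype.ext ((hy _).trans ((hc j).trans (congrArg (· * c j) (hy G).symm))))

/-! ### Noether frames -/

theorem isUnit_eval₂_of_dvd_eval₂_pderiv {σ S T : Type*} [Finite σ] [CommRing S] [CommRing T]
    [IsDomain T] [CharZero T] {φ : S →+* T} (hφ : ∀ s, φ s ≠ 0 → IsUnit (φ s)) {x : σ → T}
    {G : MvPolynomial σ S} (hG : G.eval₂ φ x ≠ 0)
    (hdvd : ∀ j, G.eval₂ φ x ∣ (MvPolynomial.pderiv j G).eval₂ φ x) :
    IsUnit (G.eval₂ φ x) := by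
  let F := FractionRing φ.range
  have hunit (s : nonZeroDivisors φ.range) : IsUnit (φ.range.subtype s) := by
    obtain ⟨⟨_, s, rfl⟩, hs⟩ := s
    exact hφ s fun h ↦ nonZeroDivisors.ne_zero hs (Subtype.ext h)
  let _ : Algebra F T := (IsLocalization.lift hunit).toAlgebra
  have : CharZero F := charZero_of_injective_algebraMap (IsFractionRing.injective φ.range F)
  let ι : S →+* F := (algebraMap φ.range F).comp φ.rangeRestrict
  have hι (H : MvPolynomial σ S) : MvPolynomial.aeval x (H.map ι) = H.eval₂ φ x := by
    have : (algebraMap F T).comp ι = φ := RingHom.ext fun s ↦ IsLocalization.lift_eq hunit _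
    rw [MvPolynomial.aeval_def, MvPolynomial.eval₂_map, this]
  simp only [← hι, ← MvPolynomial.pderiv_map] at hG hdvd ⊢
  exact isUnit_aeval_of_dvd_aeval_pderiv hG hdvd

theorem derivation_mem_pow {R A : Type*} [CommRing R] [CommRing A] [Algebra R A]
    (D : Derivation R A A) (I : Ideal A) {n : ℕ} {a : A} (ha : a ∈ I ^ (n + 1)) : D a ∈ I ^ n := by
  induction n generalizing a with
  | zero => simp
  | succ n ih =>
    rw [pow_succ] at ha
    refine Submodule.mul_induction_on ha (fun y hy z hz ↦ ?_) fun y z hy hz ↦ ?_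
    · rw [D.leibniz, smul_eq_mul, smul_eq_mul]
      refine add_mem (Ideal.mul_mem_right _ _ hy) ?_
      rw [pow_succ']
      exact Ideal.mul_mem_mul hz (ih hy)
    · rw [map_add]
      exact add_mem hy hz

theorem associated_of_sq_dvd_sub {R : Type*} [CommRing R] [IsLocalRing R] {a b : R}
    (ha : ¬IsUnit a) (hab : a ^ 2 ∣ a - b) : Associated a b := by
  obtain ⟨c, hc⟩ := hab
  have hu : IsUnit (1 - a * c) :=
    (IsLocalRing.isUnit_or_isUnit_one_sub_self (a * c)).resolve_left
      (mt isUnit_of_mul_isUnit_left ha)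
  exact ⟨hu.unit, by rw [hu.unit_spec]; linear_combination hc⟩

/-- A Noether normalisation of an ideal `p` of `A`: modulo every power of a finitely generated
ideal `I ≤ p`, the ring `A` consists of polynomials in the coordinates `x` over a subring `S`
that meets `p` trivially, and the derivations `D` act on these polynomials as the partial
derivatives with respect to `x`. -/
structure IsNoetherFrame {R A : Type*} [CommRing R] [CommRing A] [Algebra R A] (p : Ideal A)
    {m : ℕ} (D : Fin m → Derivation R A A) (x : Fin m → A) (S : Subring A) (I : Ideal A) :
    Prop where
  derivation_coord : ∀ i j, D i (x j) = if i = j then 1 else 0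
  derivation_eq_zero : ∀ i, ∀ s ∈ S, D i s = 0
  eq_zero_of_mem : ∀ s ∈ S, s ∈ p → s = 0
  fg : I.FG
  le : I ≤ p
  exists_sub_mem_pow : ∀ (n : ℕ) (r : A), ∃ q ∈ Subring.closure (S ∪ Set.range x), r - q ∈ I ^ n

namespace IsNoetherFrame

section Unit

open IsLocalRing

variable {R A O : Type*} [CommRing R] [CommRing A] [Algebra R A] [CommRing O]
  {m : ℕ} {D : Fin m → Derivation R A A} {x : Fin m → A} {S : Subring A} {I p : Ideal A}
  {Φ : A →+* O} {f : A}

theorem exists_eval₂_sub_mem_pow (h : IsNoetherFrame p D x S I) (n : ℕ) (r : A) :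
    ∃ G : MvPolynomial (Fin m) S, r - G.eval₂ S.subtype x ∈ I ^ n := by
  obtain ⟨q, hq, hrq⟩ := h.exists_sub_mem_pow n r
  have hle : Subring.closure (S ∪ Set.range x) ≤
      (MvPolynomial.eval₂Hom S.subtype x).range := by
    refine Subring.closure_le.mpr (Set.union_subset (fun s hs ↦ ?_) ?_)
    · exact ⟨.C ⟨s, hs⟩, MvPolynomial.eval₂Hom_C _ _ _⟩
    · rintro _ ⟨j, rfl⟩
      exact ⟨.X j, MvPolynomial.eval₂Hom_X' _ _ _⟩
  obtain ⟨G, rfl⟩ := hle hq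
  exact ⟨G, hrq⟩

theorem derivation_eval₂_coord (h : IsNoetherFrame p D x S I) (j : Fin m)
    (G : MvPolynomial (Fin m) S) :
    D j (G.eval₂ S.subtype x) = (MvPolynomial.pderiv j G).eval₂ S.subtype x := by
  rw [derivation_eval₂ (D j) fun s ↦ h.derivation_eq_zero j _ s.2]
  simp [h.derivation_coord]

theorem exists_pow_le_comap_span [IsLocalRing O]
    (h : IsNoetherFrame ((maximalIdeal O).comap Φ) D x S I)
    (harch : ∀ z ∈ maximalIdeal O, ∃ n : ℕ, Φ f ∣ z ^ n) :
    ∃ n, I ^ n ≤ (Ideal.span {Φ f ^ 2}).comap Φ := by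
  refine Ideal.exists_pow_le_of_le_radical_of_fg (fun a ha ↦ ?_) h.fg
  obtain ⟨n, hn⟩ := harch (Φ a) (h.le ha)
  refine ⟨n * 2, ?_⟩
  rw [Ideal.mem_comap, Ideal.mem_span_singleton, map_pow, pow_mul]
  exact pow_dvd_pow_of_dvd hn 2

theorem isUnit_of_dvd_derivation [IsLocalRing O] [IsDomain O] [CharZero O]
    (h : IsNoetherFrame ((maximalIdeal O).comap Φ) D x S I) (hf : Φ f ≠ 0)
    (harch : ∀ z ∈ maximalIdeal O, ∃ n : ℕ, Φ f ∣ z ^ n) (hdvd : ∀ j, Φ f ∣ Φ (D j f)) :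
    IsUnit (Φ f) := by
  by_contra hunit
  obtain ⟨n, hn⟩ := h.exists_pow_le_comap_span harch
  obtain ⟨G, hG⟩ := h.exists_eval₂_sub_mem_pow (n + 1) f
  have hmem {a : A} (ha : a ∈ I ^ n) : Φ f ^ 2 ∣ Φ a := Ideal.mem_span_singleton.mp (hn ha)
  have heval (H : MvPolynomial (Fin m) S) :
      Φ (H.eval₂ S.subtype x) = H.eval₂ (Φ.comp S.subtype) (Φ ∘ x) :=
    MvPolynomial.hom_eval₂ ..
  have hassoc : Associated (Φ f) (Φ (G.eval₂ S.subtype x)) :=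
    associated_of_sq_dvd_sub hunit <| by
      rw [← map_sub]
      exact hmem (Ideal.pow_le_pow_right n.le_succ hG)
  have hdvdG (j : Fin m) :
      Φ (G.eval₂ S.subtype x) ∣ Φ ((MvPolynomial.pderiv j G).eval₂ S.subtype x) := by
    rw [← hassoc.dvd_iff_dvd_left, ← h.derivation_eval₂_coord]
    have := (dvd_pow_self _ two_ne_zero).trans (hmem (derivation_mem_pow (D j) I hG))
    rw [map_sub, map_sub] at this
    exact (dvd_sub_right (hdvd j)).mp this
  simp only [heval] at hassoc hdvdG
  have hS (s : S) (hs : Φ s ≠ 0) : IsUnit (Φ s) := by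
    contrapose! hs
    rw [h.eq_zero_of_mem s s.2 hs, map_zero]
  exact hunit <| hassoc.isUnit_iff.mpr <|
    isUnit_eval₂_of_dvd_eval₂_pderiv hS (mt hassoc.eq_zero_iff.mpr hf) hdvdG

end Unit

section Extension

variable {R A A' : Type*} [CommRing R] [CommRing A] [CommRing A'] [Algebra R A']
  {m : ℕ} {ψ : A' →+* A} {p I : Ideal A} {I' : Ideal A'} {D' : Fin m → Derivation R A' A'}
  {x' : Fin m → A'} {S' : Subring A'}

theorem map_mem_closure_cons {q : A'} (hq : q ∈ Subring.closure (S' ∪ Set.range x')) (t : A) :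
    ψ q ∈ Subring.closure (S'.map ψ ∪ Set.range (Fin.cons t (ψ ∘ x') : Fin (m + 1) → A)) := by
  have : ψ q ∈ (Subring.closure (S' ∪ Set.range x')).map ψ := Subring.mem_map.mpr ⟨q, hq, rfl⟩
  rw [RingHom.map_closure, Set.image_union, ← Set.range_comp] at this
  exact Subring.closure_mono
    (Set.union_subset_union_right _ (Fin.range_cons t (ψ ∘ x') ▸ Set.subset_insert _ _)) this

theorem exists_sub_mem_pow_cons (h : IsNoetherFrame (p.comap ψ) D' x' S' I') {t a : A}
    (ha : a ∈ Subring.closure (Set.range ψ ∪ {t})) (n : ℕ) :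
    ∃ q ∈ Subring.closure (S'.map ψ ∪ Set.range (Fin.cons t (ψ ∘ x') : Fin (m + 1) → A)),
      a - q ∈ I'.map ψ ^ n := by
  let Q := Subring.closure (S'.map ψ ∪ Set.range (Fin.cons t (ψ ∘ x') : Fin (m + 1) → A))
  let mod := Ideal.Quotient.mk (I'.map ψ ^ n)
  suffices Subring.closure (Set.range ψ ∪ {t}) ≤ (Q.map mod).comap mod by
    obtain ⟨q, hq, hqa⟩ := this ha
    exact ⟨q, hq, Ideal.Quotient.eq.mp hqa.symm⟩
  rw [Subring.closure_le, Set.union_subset_iff, Set.singleton_subset_iff, Set.range_subset_iff]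
  refine ⟨fun c ↦ ?_, t, Subring.subset_closure (.inr ⟨0, rfl⟩), rfl⟩
  obtain ⟨q, hq, hcq⟩ := h.exists_sub_mem_pow n c
  refine ⟨ψ q, map_mem_closure_cons hq t, (Ideal.Quotient.eq.mpr ?_).symm⟩
  rw [← map_sub, ← Ideal.map_pow]
  exact Ideal.mem_map_of_mem ψ hcq

variable [Algebra R A]

theorem bot {D : Fin 0 → Derivation R A A} {x : Fin 0 → A} :
    IsNoetherFrame ⊥ D x ⊤ ⊥ where
  derivation_coord i := i.elim0
  derivation_eq_zero i := i.elim0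
  eq_zero_of_mem _ _ hs := hs
  fg := Submodule.fg_bot
  le := bot_le
  exists_sub_mem_pow _ r := ⟨r, Subring.subset_closure (.inl trivial), by simp⟩

theorem cons (h : IsNoetherFrame (p.comap ψ) D' x' S' I') {D : Fin (m + 1) → Derivation R A A}
    {t : A} (hDψ : ∀ a, D 0 (ψ a) = 0) (hDt : D 0 t = 1)
    (hDsψ : ∀ i a, D (Fin.succ i) (ψ a) = ψ (D' i a)) (hDst : ∀ i, D (Fin.succ i) t = 0)
    (hfg : I.FG) (hle : I ≤ p)
    (happrox : ∀ (n : ℕ) (r : A), ∃ a ∈ Subring.closure (Set.range ψ ∪ {t}), r - a ∈ I ^ n) :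
    IsNoetherFrame p D (Fin.cons t (ψ ∘ x')) (S'.map ψ) (I'.map ψ ⊔ I) where
  derivation_coord i j := by
    cases i using Fin.cases <;> cases j using Fin.cases
    · simpa using hDt
    · simp [hDψ, (Fin.succ_ne_zero _).symm]
    · simp [hDst]
    · simp [hDsψ, h.derivation_coord, apply_ite ψ]
  derivation_eq_zero i := by
    rintro _ ⟨s, hs, rfl⟩
    cases i using Fin.cases with
    | zero => exact hDψ s
    | succ i => rw [hDsψ, h.derivation_eq_zero i s hs, map_zero]
  eq_zero_of_mem := by
    rintro _ ⟨s, hs, rfl⟩ hsp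
    rw [h.eq_zero_of_mem s hs hsp, map_zero]
  fg := Submodule.FG.sup (h.fg.map ψ) hfg
  le := sup_le (Ideal.map_le_iff_le_comap.mpr h.le) hle
  exists_sub_mem_pow n r := by
    obtain ⟨a, ha, hra⟩ := happrox n r
    obtain ⟨q, hq, haq⟩ := h.exists_sub_mem_pow_cons ha n
    refine ⟨q, hq, ?_⟩
    rw [← sub_add_sub_cancel r a q]
    exact add_mem (Ideal.pow_right_mono le_sup_right n hra)
      (Ideal.pow_right_mono le_sup_left n haq)

end Extension

end IsNoetherFrame

/-! ### Weierstrass division -/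

section FunctionalCalculus

variable {ι E A : Type*} [Fintype ι] [NormedAddCommGroup E] [NormedSpace ℝ E]
  [NormedRing A] [NormedAlgebra ℝ A]

variable (A) in
/-- The power series in tuples `a : ι → A` of noncommuting elements obtained by substituting the
formal vector `∑ i, a i • b i` into the power series `p`. -/
noncomputable def tupleSeries (b : ι → E) (p : FormalMultilinearSeries ℝ E ℝ) :
    FormalMultilinearSeries ℝ (ι → A) A := fun k ↦
  ∑ w : Fin k → ι, p k (b ∘ w) •
    (ContinuousMultilinearMap.mkPiAlgebraFin ℝ k A).compContinuousLinearMap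
      fun i ↦ ContinuousLinearMap.proj (w i)

theorem map_tupleSeries_mul {C : Type*} [AddCommGroup C] [Module ℝ C] (b : ι → E)
    (p : FormalMultilinearSeries ℝ E ℝ) {a : ι → A} {L : A →ₗ[ℝ] C} {α : ι → ℝ}
    {θ : Module.End ℝ C} (hL : ∀ i T, L (a i * T) = α i • θ (L T)) (k : ℕ) (T : A) :
    L (tupleSeries A b p k (fun _ ↦ a) * T) =
      p k (fun _ ↦ ∑ i, α i • b i) • (θ ^ k) (L T) := by
  classical
  have hprod : ∀ k (w : Fin k → ι),
      L ((List.ofFn fun i ↦ a (w i)).prod * T) = (∏ i, α (w i)) • (θ ^ k) (L T) := by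
    intro k
    induction k with
    | zero => simp
    | succ k ih =>
      intro w
      rw [List.ofFn_succ, List.prod_cons, mul_assoc, hL, ih, Fin.prod_univ_succ, map_smul,
        smul_smul, pow_succ', Module.End.mul_apply]
  rw [ContinuousMultilinearMap.map_sum, Finset.sum_smul]
  simp only [tupleSeries, sum_apply, Finset.sum_mul, map_sum,
    smul_apply, smul_mul_assoc, map_smul,
    ContinuousMultilinearMap.compContinuousLinearMap_apply, ContinuousLinearMap.proj_apply,
    ContinuousMultilinearMap.mkPiAlgebraFin_apply, hprod, ContinuousMultilinearMap.map_smul_univ,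
    smul_smul, smul_eq_mul]
  exact Finset.sum_congr rfl fun w _ ↦ by rw [mul_comm]; rfl

theorem norm_tupleSeries_le [NormOneClass A] (b : ι → E) (p : FormalMultilinearSeries ℝ E ℝ)
    (k : ℕ) :
    ‖tupleSeries A b p k‖ ≤ ‖p k‖ * (∑ i, ‖b i‖) ^ k := by
  classical
  have hprod : ∀ (m : Fin k → ι → A) (w : Fin k → ι),
      ‖(List.ofFn fun i ↦ m i (w i)).prod‖ ≤ ∏ i, ‖m i‖ := fun m w ↦ by
    refine (List.norm_prod_le _).trans ?_
    rw [List.map_ofFn, List.prod_ofFn]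
    exact Finset.prod_le_prod (fun _ _ ↦ norm_nonneg _) fun i _ ↦ norm_le_pi_norm (m i) (w i)
  refine ContinuousMultilinearMap.opNorm_le_bound (by positivity) fun m ↦ ?_
  rw [Fintype.sum_pow, Finset.mul_sum, Finset.sum_mul, tupleSeries, sum_apply]
  refine norm_sum_le_of_le _ fun w _ ↦ ?_
  rw [smul_apply, norm_smul]
  exact mul_le_mul ((p k).le_opNorm _) (hprod m w) (norm_nonneg _) (by positivity)

theorem radius_tupleSeries_pos [NormOneClass A] (b : ι → E) {p : FormalMultilinearSeries ℝ E ℝ}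
    (hp : 0 < p.radius) : 0 < (tupleSeries A b p).radius := by
  obtain ⟨C, t, hC, ht, hpt⟩ := p.le_mul_pow_of_radius_pos hp
  have hbound : ∀ k, ‖tupleSeries A b p k‖ * ((t * (1 + ∑ i, ‖b i‖))⁻¹) ^ k ≤ C := by
    intro k
    have hle : (∑ i, ‖b i‖) ^ k ≤ (1 + ∑ i, ‖b i‖) ^ k := by gcongr; linarith
    rw [inv_pow, ← div_eq_mul_inv, div_le_iff₀ (by positivity), mul_pow, ← mul_assoc]
    exact (norm_tupleSeries_le b p k).trans (mul_le_mul (hpt k) hle (by positivity) (by positivity))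
  exact (ENNReal.ofReal_pos.2 (by positivity)).trans_le
    ((tupleSeries A b p).le_radius_of_bound (r := (t * (1 + ∑ i, ‖b i‖))⁻¹.toNNReal) C fun k ↦ by
      rw [Real.coe_toNNReal _ (by positivity)]
      exact hbound k)

variable [CompleteSpace A]

theorem hasSum_map_sum_tupleSeries_mul {b : ι → E} {p : FormalMultilinearSeries ℝ E ℝ} {a : ι → A}
    (ha : a ∈ Metric.eball 0 (tupleSeries A b p).radius) {L : A →L[ℝ] ℝ} {α : ι → ℝ}
    (hL : ∀ i T, L (a i * T) = α i * L T) (T : A) :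
    HasSum (fun k ↦ p k (fun _ ↦ ∑ i, α i • b i) * L T)
      (L ((tupleSeries A b p).sum a * T)) := by
  have hsum := L.hasSum (((tupleSeries A b p).hasSum ha).mul_right T)
  refine hsum.congr_fun fun k ↦ ?_
  symm
  simpa using (map_tupleSeries_mul b p (L := (L : A →ₗ[ℝ] ℝ)) (θ := 1) hL k T)

theorem hasSum_sum_tupleSeries_smul {b : ι → E} {p : FormalMultilinearSeries ℝ E ℝ} {α : ι → ℝ}
    {M : A} (hM : (fun i ↦ α i • M) ∈ Metric.eball 0 (tupleSeries A b p).radius) :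
    HasSum (fun k ↦ p k (fun _ ↦ ∑ i, α i • b i) • M ^ k)
      ((tupleSeries A b p).sum fun i ↦ α i • M) := by
  refine ((tupleSeries A b p).hasSum hM).congr_fun fun k ↦ ?_
  symm
  have := map_tupleSeries_mul b p (L := (LinearMap.id : A →ₗ[ℝ] A)) (a := fun i ↦ α i • M) (α := α)
    (θ := LinearMap.mulLeft ℝ M) (fun i T ↦ by simp) k 1
  simpa using this

end FunctionalCalculus

section Shift

variable {A : Type*} [NormedRing A] [NormedAlgebra ℝ A]

/-- An abstract unilateral shift `M` with its backward shift `B` and the functional `ε` taking the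
corner entry of a matrix with respect to the shifted orthogonal system. -/
structure IsShift (M B : A) (ε : A →L[ℝ] ℝ) : Prop where
  backward_mul : B * M = 1
  map_shift_mul : ∀ X, ε (M * X) = 0
  map_mul_backward : ∀ X, ε (X * B) = 0
  map_one : ε 1 = 1

theorem exists_isShift {S B : A} (hBS : B * S = 1) (hSB : S * B ≠ 1) :
    ∃ ε, IsShift S B ε := by
  let P := 1 - S * B
  have hPS : P * S = 0 := by simp [P, sub_mul, mul_assoc, hBS]
  have hBP : B * P = 0 := by simp [P, mul_sub, ← mul_assoc, hBS]
  have hPP : P * P = P := by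
    nth_rewrite 2 [show P = 1 - S * B from rfl]
    rw [mul_sub, mul_one, ← mul_assoc, hPS, zero_mul, sub_zero]
  obtain ⟨ℓ, hℓ⟩ := SeparatingDual.exists_eq_one (R := ℝ) (sub_ne_zero.2 hSB.symm : P ≠ 0)
  refine ⟨ℓ.comp ((ContinuousLinearMap.mul ℝ A P).comp ((ContinuousLinearMap.mul ℝ A).flip P)),
    hBS, fun X ↦ ?_, fun X ↦ ?_, ?_⟩
  · simp [← mul_assoc, hPS]
  · simp [mul_assoc, hBP]
  · change ℓ (P * (1 * P)) = 1
    rw [one_mul, hPP, hℓ]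

theorem IsShift.smul {M B : A} {ε : A →L[ℝ] ℝ} (h : IsShift M B ε) {σ : ℝ} (hσ : σ ≠ 0) :
    IsShift (σ • M) (σ⁻¹ • B) ε where
  backward_mul := by rw [smul_mul_smul_comm, inv_mul_cancel₀ hσ, h.backward_mul, one_smul]
  map_shift_mul X := by rw [smul_mul_assoc, map_smul, h.map_shift_mul, smul_zero]
  map_mul_backward X := by rw [mul_smul_comm, map_smul, h.map_mul_backward, smul_zero]
  map_one := h.map_one

theorem pow_mul_pow_add_of_mul_eq_one {G : Type*} [Monoid G] {B M : G} (h : B * M = 1) (b k : ℕ) :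
    B ^ b * M ^ (k + b) = M ^ k := by
  induction b with
  | zero => simp
  | succ b ih => rw [pow_succ, ← add_assoc, pow_succ', mul_assoc, ← mul_assoc B, h, one_mul, ih]

/-- The functional `X ↦ ε ((1 - s B)⁻¹ X)`, which is the generating function at `s` of the entries
of the first column of `X`. On the algebra of a shift it plays the role of evaluation at `s`. -/
noncomputable def shiftEval (B : A) (ε : A →L[ℝ] ℝ) (s : ℝ) : A →L[ℝ] ℝ :=
  ε.comp (ContinuousLinearMap.mul ℝ A (Ring.inverse (1 - s • B)))

namespace IsShift

variable {M B : A} {ε : A →L[ℝ] ℝ} {s : ℝ}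

theorem shiftEval_shift_mul (h : IsShift M B ε) (hs : IsUnit (1 - s • B)) (X : A) :
    shiftEval B ε s (M * X) = s * shiftEval B ε s X := by
  have hM : (1 - s • B) * (M * X) = M * X - s • X := by
    rw [sub_mul, one_mul, smul_mul_assoc, ← mul_assoc B, h.backward_mul, one_mul]
  have hinv : M * X = Ring.inverse (1 - s • B) * (M * X - s • X) := by
    rw [← hM, Ring.inverse_mul_cancel_left _ _ hs]
  have hε := h.map_shift_mul X
  rw [hinv, mul_sub, mul_smul_comm, map_sub, map_smul, sub_eq_zero] at hε
  exact hε

theorem shiftEval_one (h : IsShift M B ε) (hs : IsUnit (1 - s • B)) : shiftEval B ε s 1 = 1 := by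
  have hinv : Ring.inverse (1 - s • B) = 1 + s • (Ring.inverse (1 - s • B) * B) := by
    rw [← mul_smul_comm, ← sub_eq_iff_eq_add, ← mul_one_sub, Ring.inverse_mul_cancel _ hs]
  simp only [shiftEval, ContinuousLinearMap.comp_apply, ContinuousLinearMap.mul_apply', mul_one]
  rw [hinv, map_add, h.map_one, map_smul, h.map_mul_backward, smul_zero, add_zero]

end IsShift

theorem shiftEval_eq_sum_of_pow_mul_eq_zero {B : A} (ε : A →L[ℝ] ℝ) {s : ℝ}
    (hs : IsUnit (1 - s • B)) {b : ℕ} {X : A} (hX : B ^ b * X = 0) :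
    shiftEval B ε s X = ∑ i : Fin b, ε (B ^ (i : ℕ) * X) * s ^ (i : ℕ) := by
  have hgeom : (1 - s • B) * ((∑ i ∈ Finset.range b, (s • B) ^ i) * X) = X := by
    rw [← mul_assoc, mul_neg_geom_sum, sub_mul, one_mul, smul_pow, smul_mul_assoc, hX, smul_zero,
      sub_zero]
  have hinv : Ring.inverse (1 - s • B) * X = (∑ i ∈ Finset.range b, (s • B) ^ i) * X := by
    nth_rewrite 1 [← hgeom]
    exact Ring.inverse_mul_cancel_left _ _ hs
  simp only [shiftEval, ContinuousLinearMap.comp_apply, ContinuousLinearMap.mul_apply', hinv,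
    Finset.sum_mul, map_sum, smul_pow, smul_mul_assoc, map_smul, smul_eq_mul, Finset.sum_range]
  exact Finset.sum_congr rfl fun i _ ↦ mul_comm _ _

variable [CompleteSpace A]

theorem analyticAt_ringInverse {E : Type*} [NormedAddCommGroup E] [NormedSpace ℝ E] {f : E → A}
    {x : E} (hf : AnalyticAt ℝ f x) (hx : IsUnit (f x)) :
    AnalyticAt ℝ (fun y ↦ Ring.inverse (f y)) x := by
  obtain ⟨u, hu⟩ := hx
  exact (hu ▸ analyticAt_inverse u : AnalyticAt ℝ Ring.inverse (f x)).comp hf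

theorem analyticAt_shiftEval {E : Type*} [NormedAddCommGroup E] [NormedSpace ℝ E] {B : A}
    (ε : A →L[ℝ] ℝ) {s : E → ℝ} {T : E → A} {x : E} (hs : AnalyticAt ℝ s x)
    (hT : AnalyticAt ℝ T x) (hx : IsUnit (1 - s x • B)) :
    AnalyticAt ℝ (fun y ↦ shiftEval B ε (s y) (T y)) x :=
  (ε.analyticAt _).comp
    ((analyticAt_ringInverse (analyticAt_const.sub (hs.smul analyticAt_const)) hx).mul hT)

theorem eventually_isUnit_one_sub_smul (B : A) : ∀ᶠ s : ℝ in 𝓝 0, IsUnit (1 - s • B) := by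
  have hcont : ContinuousAt (fun s : ℝ ↦ 1 - s • B) 0 := by fun_prop
  exact hcont.eventually (Units.isOpen.mem_nhds (by simp))

end Shift

section WeierstrassDivision

variable {W A : Type*} [NormedAddCommGroup W] [NormedSpace ℝ W] [NormedRing A] [NormedAlgebra ℝ A]

/-- An analytic family `F` of Toeplitz operators with symbol `f`: at the point `(w, s)`, the
evaluation functional `shiftEval B ε s` turns left multiplication by `F w` into multiplication by
`f (w, s)`. -/
structure IsToeplitzSymbol (B : A) (ε : A →L[ℝ] ℝ) (f : W × ℝ → ℝ) (F : W → A) : Prop where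
  analyticAt : AnalyticAt ℝ F 0
  shiftEval_mul : ∀ᶠ z : W × ℝ in 𝓝 0, ∀ T,
    shiftEval B ε z.2 (F z.1 * T) = f z * shiftEval B ε z.2 T

theorem pow_mul_eq_of_hasSum {M B X Y : A} (hBM : B * M = 1) {c d : ℕ → ℝ} {b : ℕ}
    (hc : ∀ k < b, c k = 0) (hd : ∀ k, d k = c (k + b)) (hX : HasSum (fun k ↦ c k • M ^ k) X)
    (hY : HasSum (fun k ↦ d k • M ^ k) Y) : B ^ b * X = Y := by
  have hzero : ∑ k ∈ Finset.range b, c k • M ^ k = 0 :=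
    Finset.sum_eq_zero fun k hk ↦ by rw [hc k (Finset.mem_range.1 hk), zero_smul]
  have htail := ((hasSum_nat_add_iff' b).2 hX).mul_left (B ^ b)
  rw [hzero, sub_zero] at htail
  exact htail.unique (hY.congr_fun fun k ↦ by
    rw [mul_smul_comm, pow_mul_pow_add_of_mul_eq_one hBM, hd])

theorem tendsto_smul_smul_zero {ι : Type*} (α : ι → ℝ) (S : A) :
    Filter.Tendsto (fun σ : ℝ ↦ fun i ↦ α i • σ • S) (𝓝 0) (𝓝 0) :=
  Continuous.tendsto' (by fun_prop) 0 0 (by ext; simp)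

theorem eventually_smul_mem_eball {ι : Type*} [Fintype ι] (α : ι → ℝ) (S : A) {r : ENNReal}
    (hr : 0 < r) : ∀ᶠ σ : ℝ in 𝓝 0, (fun i ↦ α i • σ • S) ∈ Metric.eball 0 r :=
  (tendsto_smul_smul_zero α S).eventually_mem (Metric.eball_mem_nhds _ hr)

variable [CompleteSpace A]

theorem IsShift.exists_division {M B : A} {ε : A →L[ℝ] ℝ} (hM : IsShift M B ε)
    {h r : W × ℝ → ℝ} {H R : W → A} (hH : IsToeplitzSymbol B ε h H)
    (hR : IsToeplitzSymbol B ε r R) {b : ℕ} (hb : IsUnit (B ^ b * H 0)) :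
    ∃ (q : W × ℝ → ℝ) (c : Fin b → W → ℝ), AnalyticAt ℝ q 0 ∧ (∀ i, AnalyticAt ℝ (c i) 0) ∧
      ∀ᶠ z in 𝓝 0, r z = q z * h z + ∑ i, c i z.1 * z.2 ^ (i : ℕ) := by
  have hΛ : AnalyticAt ℝ (fun w ↦ B ^ b * H w) 0 := analyticAt_const.mul hH.analyticAt
  let T : W → A := fun w ↦ Ring.inverse (B ^ b * H w) * (B ^ b * R w)
  have hT : AnalyticAt ℝ T 0 :=
    (analyticAt_ringInverse hΛ hb).mul (analyticAt_const.mul hR.analyticAt)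
  have hrem : AnalyticAt ℝ (fun w ↦ R w - H w * T w) 0 :=
    hR.analyticAt.sub (hH.analyticAt.mul hT)
  refine ⟨fun z ↦ shiftEval B ε z.2 (T z.1), fun i w ↦ ε (B ^ (i : ℕ) * (R w - H w * T w)),
    ?_, fun i ↦ (ε.analyticAt _).comp (analyticAt_const.mul hrem), ?_⟩
  · exact analyticAt_shiftEval ε analyticAt_snd
      (hT.comp_of_eq (f := Prod.fst (α := W) (β := ℝ)) analyticAt_fst rfl) (by simp)
  have hfst : Filter.Tendsto (Prod.fst : W × ℝ → W) (𝓝 0) (𝓝 0) := continuous_fst.tendsto 0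
  have hsnd : Filter.Tendsto (Prod.snd : W × ℝ → ℝ) (𝓝 0) (𝓝 0) := continuous_snd.tendsto 0
  filter_upwards [hH.shiftEval_mul, hR.shiftEval_mul,
    hfst.eventually (hΛ.continuousAt.eventually (Units.isOpen.mem_nhds hb)),
    hsnd.eventually (eventually_isUnit_one_sub_smul B)] with z hHz hRz hunit hs
  have hkill : B ^ b * (R z.1 - H z.1 * T z.1) = 0 := by
    rw [mul_sub, ← mul_assoc, Ring.mul_inverse_cancel_left _ _ hunit, sub_self]
  have hrz : shiftEval B ε z.2 (R z.1) = r z := by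
    simpa [hM.shiftEval_one hs] using hRz 1
  rw [← shiftEval_eq_sum_of_pow_mul_eq_zero ε hs hkill, map_sub, hHz, hrz, mul_comm (h z)]
  ring

variable [NormOneClass A]

theorem IsShift.exists_isToeplitzSymbol {ι : Type*} [Fintype ι] (β : Module.Basis ι ℝ (W × ℝ))
    {f : W × ℝ → ℝ} {p : FormalMultilinearSeries ℝ (W × ℝ) ℝ} (hf : HasFPowerSeriesAt f p 0)
    {M B : A} {ε : A →L[ℝ] ℝ} (hM : IsShift M B ε)
    (hmem : (fun i ↦ β.repr (0, 1) i • M) ∈ Metric.eball 0 (tupleSeries A β p).radius) :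
    ∃ F : W → A, IsToeplitzSymbol B ε f F ∧
      HasSum (fun k ↦ p k (fun _ ↦ (0, 1)) • M ^ k) (F 0) := by
  let a : W → ι → A := fun w i ↦ β.repr (w, 0) i • 1 + β.repr (0, 1) i • M
  have ha : AnalyticAt ℝ a 0 := by
    have : FiniteDimensional ℝ (W × ℝ) := β.finiteDimensional_of_finite
    refine AnalyticAt.pi fun i ↦ AnalyticAt.fun_add (AnalyticAt.fun_smul ?_ analyticAt_const)
      analyticAt_const
    exact ((LinearMap.toContinuousLinearMap (β.coord i)).comp
      (ContinuousLinearMap.inl ℝ W ℝ)).analyticAt 0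
  have ha0 : a 0 = fun i ↦ β.repr (0, 1) i • M := by
    ext i
    simp only [a, ← Prod.zero_eq_mk, map_zero, Finsupp.zero_apply, zero_smul, zero_add]
  refine ⟨fun w ↦ (tupleSeries A β p).sum (a w), ⟨?_, ?_⟩, ?_⟩
  · have hrad : 0 < (tupleSeries A β p).radius := radius_tupleSeries_pos β hf.radius_pos
    exact (((tupleSeries A β p).hasFPowerSeriesOnBall hrad).analyticAt_of_mem (ha0 ▸ hmem)).comp ha
  · have hfst : Filter.Tendsto (Prod.fst : W × ℝ → W) (𝓝 0) (𝓝 0) := continuous_fst.tendsto 0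
    have hsnd : Filter.Tendsto (Prod.snd : W × ℝ → ℝ) (𝓝 0) (𝓝 0) := continuous_snd.tendsto 0
    filter_upwards [hf.eventually_hasSum,
      hfst.eventually (ha.continuousAt.eventually_mem (Metric.isOpen_eball.mem_nhds (ha0 ▸ hmem))),
      hsnd.eventually (eventually_isUnit_one_sub_smul B)] with z hz haz hs T
    have hL : ∀ i X, shiftEval B ε z.2 (a z.1 i * X) = β.repr z i * shiftEval B ε z.2 X := by
      intro i X
      have hrepr : β.repr z i = β.repr (z.1, 0) i + z.2 * β.repr (0, 1) i := by
        rw [← smul_eq_mul, ← Finsupp.smul_apply, ← map_smul, ← Finsupp.add_apply, ← map_add]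
        simp
      simp only [a, add_mul, smul_mul_assoc, one_mul, map_add, map_smul, smul_eq_mul,
        hM.shiftEval_shift_mul hs, hrepr]
      ring
    have hsum := hasSum_map_sum_tupleSeries_mul haz hL T
    rw [β.sum_repr] at hsum
    exact hsum.unique (by simpa using hz.mul_right _)
  · have hsum := hasSum_sum_tupleSeries_smul hmem
    rw [β.sum_repr] at hsum
    simpa only [ha0] using hsum

theorem eventually_exists_isUnit_hasSum {q : FormalMultilinearSeries ℝ ℝ ℝ} (hq : 0 < q.radius)
    (hq0 : q.coeff 0 ≠ 0) (S : A) :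
    ∀ᶠ σ : ℝ in 𝓝 0, ∃ u, IsUnit u ∧ HasSum (fun k ↦ q.coeff k • (σ • S) ^ k) u := by
  let Q := tupleSeries A (fun _ : Unit ↦ (1 : ℝ)) q
  have hrad : 0 < Q.radius := radius_tupleSeries_pos _ hq
  have hsmall := fun S : A ↦ eventually_smul_mem_eball (1 : Unit → ℝ) S hrad
  have hunit : IsUnit (Q.sum fun _ ↦ 0) := by
    have hval : HasSum (fun k ↦ q.coeff k • (0 : A) ^ k) (Q.sum fun _ ↦ 0) := by
      simpa using hasSum_sum_tupleSeries_smul (hsmall (0 : A)).self_of_nhds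
    rw [← (hasSum_single 0 fun k hk ↦ by simp [hk]).unique hval, pow_zero,
      ← Algebra.algebraMap_eq_smul_one]
    exact (isUnit_iff_ne_zero.2 hq0).map _
  have hQ : ContinuousAt Q.sum 0 := (Q.hasFPowerSeriesOnBall hrad).analyticAt.continuousAt
  filter_upwards [hsmall S, (tendsto_smul_smul_zero 1 S).eventually
    (hQ.eventually_mem (Units.isOpen.mem_nhds hunit))] with σ hσ hu
  exact ⟨_, hu, by simpa using hasSum_sum_tupleSeries_smul hσ⟩

theorem exists_coeff_shift_ne_zero {f : ℝ → ℝ} {p : FormalMultilinearSeries ℝ ℝ ℝ}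
    (hf : HasFPowerSeriesAt f p 0) (hne : ¬ ∀ᶠ s in 𝓝 0, f s = 0) :
    ∃ (b : ℕ) (q : FormalMultilinearSeries ℝ ℝ ℝ), 0 < q.radius ∧ q.coeff 0 ≠ 0 ∧
      (∀ k < b, p.coeff k = 0) ∧ ∀ k, q.coeff k = p.coeff (k + b) := by
  have hp : p ≠ 0 := fun hp ↦ hne (hf.locally_zero_iff.2 hp)
  refine ⟨p.order, FormalMultilinearSeries.fslope^[p.order] p,
    (hf.has_fpower_series_iterate_dslope_fslope _).radius_pos, ?_, fun k hk ↦ ?_,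
    fun k ↦ FormalMultilinearSeries.coeff_iterate_fslope _ _⟩
  · rw [FormalMultilinearSeries.coeff_iterate_fslope, zero_add]
    exact FormalMultilinearSeries.coeff_eq_zero.not.2
      (FormalMultilinearSeries.apply_order_ne_zero hp)
  · rw [FormalMultilinearSeries.coeff, FormalMultilinearSeries.apply_eq_zero_of_lt_order hk]
    rfl

theorem weierstrass_division_of_mul_eq_one [FiniteDimensional ℝ W] {S B : A} (hBS : B * S = 1)
    (hSB : S * B ≠ 1) {h : W × ℝ → ℝ} (hh : AnalyticAt ℝ h 0)
    (hne : ¬ ∀ᶠ s in 𝓝 (0 : ℝ), h (0, s) = 0) :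
    ∃ b : ℕ, ∀ r : W × ℝ → ℝ, AnalyticAt ℝ r 0 →
      ∃ (q : W × ℝ → ℝ) (c : Fin b → W → ℝ), AnalyticAt ℝ q 0 ∧ (∀ i, AnalyticAt ℝ (c i) 0) ∧
        ∀ᶠ z in 𝓝 0, r z = q z * h z + ∑ i, c i z.1 * z.2 ^ (i : ℕ) := by
  obtain ⟨p, hp⟩ := hh
  have hline : HasFPowerSeriesAt (fun s : ℝ ↦ h (0, s))
      (p.compContinuousLinearMap (ContinuousLinearMap.inr ℝ W ℝ)) 0 :=
    HasFPowerSeriesAt.compContinuousLinearMap (u := ContinuousLinearMap.inr ℝ W ℝ)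
      (by rwa [map_zero])
  obtain ⟨b, q, hq, hq0, hlow, hshift⟩ := exists_coeff_shift_ne_zero hline hne
  refine ⟨b, fun r hr ↦ ?_⟩
  obtain ⟨p', hp'⟩ := hr
  let n := Module.finrank ℝ (W × ℝ)
  let β : Module.Basis (Fin n) ℝ (W × ℝ) := Module.finBasis ℝ (W × ℝ)
  have hmem := fun {f : W × ℝ → ℝ} {p} (hf : HasFPowerSeriesAt f p 0) ↦
    eventually_smul_mem_eball (β.repr (0, 1)) S (radius_tupleSeries_pos (A := A) β hf.radius_pos)
  obtain ⟨σ, ⟨⟨hσp, hσp'⟩, u, hu, hsum⟩, hσ⟩ :=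
    (((((hmem hp).and (hmem hp')).and (eventually_exists_isUnit_hasSum hq hq0 S)).filter_mono
      nhdsWithin_le_nhds).and (self_mem_nhdsWithin (s := {0}ᶜ))).exists
  obtain ⟨ε, hε⟩ := exists_isShift hBS hSB
  have hM := hε.smul hσ
  obtain ⟨H, hH, hH0⟩ := hM.exists_isToeplitzSymbol β hp hσp
  obtain ⟨R, hR, -⟩ := hM.exists_isToeplitzSymbol β hp' hσp'
  refine hM.exists_division hH hR (b := b) ?_
  rwa [pow_mul_eq_of_hasSum hM.backward_mul hlow hshift (hH0.congr_fun fun _ ↦ rfl) hsum]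

open scoped BoundedContinuousFunction in
theorem weierstrass_division [FiniteDimensional ℝ W] {h : W × ℝ → ℝ} (hh : AnalyticAt ℝ h 0)
    (hne : ¬ ∀ᶠ s in 𝓝 (0 : ℝ), h (0, s) = 0) :
    ∃ b : ℕ, ∀ r : W × ℝ → ℝ, AnalyticAt ℝ r 0 →
      ∃ (q : W × ℝ → ℝ) (c : Fin b → W → ℝ), AnalyticAt ℝ q 0 ∧ (∀ i, AnalyticAt ℝ (c i) 0) ∧
        ∀ᶠ z in 𝓝 0, r z = q z * h z + ∑ i, c i z.1 * z.2 ^ (i : ℕ) := by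
  let shift : C(ℕ, ℕ) → (ℕ →ᵇ ℝ) →L[ℝ] (ℕ →ᵇ ℝ) :=
    BoundedContinuousFunction.compContinuousCLM ℝ ℝ
  have : Nontrivial (ℕ →ᵇ ℝ) := NormOneClass.nontrivial
  refine weierstrass_division_of_mul_eq_one (S := shift ⟨Nat.pred, by fun_prop⟩)
    (B := shift ⟨Nat.succ, by fun_prop⟩) ?_ (fun hSB ↦ ?_) hh hne
  · ext
    rfl
  · let δ : ℕ →ᵇ ℝ := .ofNormedAddCommGroupDiscrete (fun n ↦ if n = 0 then 1 else 0) 1 fun n ↦ by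
      split_ifs <;> simp
    have hδ := DFunLike.congr_fun (DFunLike.congr_fun hSB δ) 0
    simp [shift, δ] at hδ

end WeierstrassDivision

/-! ### Germs of analytic functions -/

section AnalyticGerm

open Filter

/-- The ring of real functions on `E` that are analytic at the origin. -/
def analyticFunctions (E : Type*) [NormedAddCommGroup E] [NormedSpace ℝ E] :
    Subring (E → ℝ) where
  carrier := {f | AnalyticAt ℝ f 0}
  mul_mem' hf hg := hf.mul hg
  one_mem' := analyticAt_const
  add_mem' hf hg := hf.add hg
  zero_mem' := analyticAt_const
  neg_mem' hf := hf.neg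

/-- The ring of germs at the origin of real-analytic functions on `E`, realised inside the ring of
germs of all real functions. -/
abbrev AnalyticGerm (E : Type*) [NormedAddCommGroup E] [NormedSpace ℝ E] : Type _ :=
  ((Germ.coeRingHom (𝓝 (0 : E))).comp (analyticFunctions E).subtype).range

namespace AnalyticGerm

variable {E F : Type*} [NormedAddCommGroup E] [NormedSpace ℝ E] [NormedAddCommGroup F]
  [NormedSpace ℝ F]

/-- The germ of a function analytic at the origin. -/
def mk : analyticFunctions E →+* AnalyticGerm E :=
  RingHom.rangeRestrict _

theorem mk_surjective : Function.Surjective (mk : analyticFunctions E → AnalyticGerm E) :=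
  RingHom.rangeRestrict_surjective _

theorem mk_eq_mk_iff {f g : analyticFunctions E} : mk f = mk g ↔ f.1 =ᶠ[𝓝 0] g.1 :=
  Subtype.ext_iff.trans Germ.coe_eq

theorem mk_eq_zero_iff {f : analyticFunctions E} : mk f = 0 ↔ ∀ᶠ z in 𝓝 0, f.1 z = 0 := by
  rw [← map_zero mk, mk_eq_mk_iff]
  rfl

theorem isUnit_mk {f : analyticFunctions E} (hf : f.1 0 ≠ 0) : IsUnit (mk f) := by
  refine IsUnit.of_mul_eq_one (mk ⟨f.1⁻¹, f.2.inv hf⟩) ?_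
  rw [← map_mul, ← map_one mk, mk_eq_mk_iff]
  filter_upwards [f.2.continuousAt.eventually_ne hf] with z hz
  exact mul_inv_cancel₀ hz

/-- The germ of a constant function. -/
def const : ℝ →+* AnalyticGerm E :=
  mk.comp ((Pi.constRingHom E ℝ).codRestrict (analyticFunctions E) fun _ ↦ analyticAt_const)

/-- The germ of a continuous linear form. -/
def linear (l : E →L[ℝ] ℝ) : AnalyticGerm E :=
  mk ⟨l, l.analyticAt 0⟩

/-- Composition of analytic germs with a function tending to the origin along a filter. -/
def compTendsto {α : Type*} {L : Filter α} (y : α → E) (hy : Tendsto y L (𝓝 0)) :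
    AnalyticGerm E →+* Germ L ℝ where
  toFun γ := γ.1.compTendsto y hy
  map_one' := rfl
  map_mul' := mk_surjective.forall₂.mpr fun _ _ ↦ rfl
  map_zero' := rfl
  map_add' := mk_surjective.forall₂.mpr fun _ _ ↦ rfl

/-- Precomposition of analytic functions with a continuous linear map. -/
def compLinear (T : E →L[ℝ] F) (f : analyticFunctions F) : analyticFunctions E :=
  ⟨f.1 ∘ T, AnalyticAt.comp ((map_zero T).symm ▸ f.2) (T.analyticAt 0)⟩

/-- Pullback of analytic germs by a continuous linear map. -/
def pullback (T : E →L[ℝ] F) : AnalyticGerm F →+* AnalyticGerm E :=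
  (compTendsto T (T.continuous.tendsto' 0 0 (map_zero T))).codRestrict _ fun γ ↦ by
    obtain ⟨f, rfl⟩ := mk_surjective γ
    exact ⟨compLinear T f, rfl⟩

theorem pullback_mk (T : E →L[ℝ] F) (f : analyticFunctions F) :
    pullback T (mk f) = mk (compLinear T f) :=
  rfl

/-- The derivative of an analytic function in the direction `v`. -/
noncomputable def lineDerivative (v : E) (f : analyticFunctions E) : analyticFunctions E :=
  ⟨fun z ↦ fderiv ℝ f.1 z v, ((ContinuousLinearMap.apply ℝ ℝ v).analyticAt _).comp f.2.fderiv⟩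

theorem mk_lineDerivative_congr (v : E) {f g : analyticFunctions E} (h : mk f = mk g) :
    mk (lineDerivative v f) = mk (lineDerivative v g) := by
  rw [mk_eq_mk_iff] at h ⊢
  filter_upwards [h.fderiv (𝕜 := ℝ)] with z hz
  exact congrArg (· v) hz

theorem mk_lineDerivative_add (v : E) (f g : analyticFunctions E) :
    mk (lineDerivative v (f + g)) = mk (lineDerivative v f) + mk (lineDerivative v g) := by
  rw [← map_add, mk_eq_mk_iff]
  filter_upwards [f.2.eventually_analyticAt, g.2.eventually_analyticAt] with z hf hg
  exact congrArg (· v) (fderiv_add hf.differentiableAt hg.differentiableAt)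

theorem mk_lineDerivative_mul (v : E) (f g : analyticFunctions E) :
    mk (lineDerivative v (f * g)) =
      mk f * mk (lineDerivative v g) + mk g * mk (lineDerivative v f) := by
  rw [← map_mul, ← map_mul, ← map_add, mk_eq_mk_iff]
  filter_upwards [f.2.eventually_analyticAt, g.2.eventually_analyticAt] with z hf hg
  exact congrArg (· v) (fderiv_mul hf.differentiableAt hg.differentiableAt)

/-- The directional derivative, as a derivation of the ring of analytic germs. -/
noncomputable def derivation (v : E) : Derivation ℤ (AnalyticGerm E) (AnalyticGerm E) :=
  let D (γ : AnalyticGerm E) : AnalyticGerm E :=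
    mk (lineDerivative v (Function.surjInv mk_surjective γ))
  have hD (f : analyticFunctions E) : D (mk f) = mk (lineDerivative v f) :=
    mk_lineDerivative_congr v (Function.surjInv_eq mk_surjective _)
  Derivation.mk'
    (AddMonoidHom.mk' D <| mk_surjective.forall₂.mpr fun f g ↦ by
      rw [← map_add, hD, hD, hD, mk_lineDerivative_add]).toIntLinearMap
    (mk_surjective.forall₂.mpr fun f g ↦ by
      change D _ = _ * D _ + _ * D _
      rw [← map_mul, hD, hD, hD, mk_lineDerivative_mul])

theorem derivation_mk (v : E) (f : analyticFunctions E) :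
    derivation v (mk f) = mk (lineDerivative v f) :=
  mk_lineDerivative_congr v (Function.surjInv_eq mk_surjective _)

theorem derivation_zero (γ : AnalyticGerm E) : derivation 0 γ = 0 := by
  obtain ⟨f, rfl⟩ := mk_surjective γ
  rw [derivation_mk, mk_eq_zero_iff]
  exact .of_forall fun z ↦ map_zero (fderiv ℝ f.1 z)

theorem derivation_linear (v : E) (l : E →L[ℝ] ℝ) : derivation v (linear l) = const (l v) := by
  refine (derivation_mk v _).trans (mk_eq_mk_iff.mpr (.of_forall fun z ↦ ?_))
  exact congrArg (· v) l.fderiv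

theorem derivation_pullback (T : E →L[ℝ] F) (v : E) (γ : AnalyticGerm F) :
    derivation v (pullback T γ) = pullback T (derivation (T v) γ) := by
  obtain ⟨f, rfl⟩ := mk_surjective γ
  rw [pullback_mk, derivation_mk, derivation_mk, pullback_mk, mk_eq_mk_iff]
  have hT : Tendsto T (𝓝 0) (𝓝 0) := T.continuous.tendsto' 0 0 (map_zero T)
  filter_upwards [hT.eventually f.2.eventually_analyticAt] with z hz
  exact congrArg (· v) (hz.differentiableAt.hasFDerivAt.comp z T.hasFDerivAt).fderiv

theorem exists_pullback_toSpanSingleton_ne_zero {γ : AnalyticGerm E} (h0 : γ ≠ 0)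
    (hunit : ¬IsUnit γ) :
    ∃ v : E, v ≠ 0 ∧ pullback (ContinuousLinearMap.toSpanSingleton ℝ v) γ ≠ 0 := by
  obtain ⟨f, rfl⟩ := mk_surjective γ
  have hf0 : f.1 0 = 0 := not_ne_iff.mp (mt isUnit_mk hunit)
  obtain ⟨ε, hε, hball⟩ := Metric.eventually_nhds_iff_ball.mp f.2.eventually_analyticAt
  obtain ⟨v, hv, hfv⟩ : ∃ v ∈ Metric.ball (0 : E) ε, f.1 v ≠ 0 := by
    contrapose! h0
    exact mk_eq_zero_iff.mpr (eventually_of_mem (Metric.ball_mem_nhds 0 hε) h0)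
  refine ⟨v, fun h ↦ hfv (h ▸ hf0), fun hzero ↦ hfv ?_⟩
  rw [pullback_mk, mk_eq_zero_iff] at hzero
  let T := ContinuousLinearMap.toSpanSingleton ℝ v
  have hconv : Convex ℝ (T ⁻¹' Metric.ball 0 ε) :=
    (convex_ball (0 : E) ε).linear_preimage T.toLinearMap
  have han : AnalyticOnNhd ℝ (f.1 ∘ T) (T ⁻¹' Metric.ball 0 ε) := fun s hs ↦
    (hball _ hs).comp (T.analyticAt s)
  have hline := han.eqOn_zero_of_preconnected_of_eventuallyEq_zero hconv.isPreconnected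
    (z₀ := 0) (by simpa using hε) hzero (x := 1) (by simpa [T] using hv)
  simpa [T] using hline

end AnalyticGerm

end AnalyticGerm

theorem exists_continuousLinearEquiv_ker_prod {E : Type*} [NormedAddCommGroup E]
    [NormedSpace ℝ E] {v : E} (hv : v ≠ 0) :
    ∃ (l : E →L[ℝ] ℝ) (e : E ≃L[ℝ] l.ker × ℝ), e.symm (0, 1) = v := by
  obtain ⟨l, hl⟩ := SeparatingDual.exists_eq_one (R := ℝ) hv
  let e := (ContinuousLinearEquiv.equivOfRightInverse l
    (.toSpanSingleton ℝ v) fun s ↦ by simp [hl]).trans (ContinuousLinearEquiv.prodComm ℝ ℝ l.ker)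
  refine ⟨l, e, e.injective ?_⟩
  rw [e.apply_symm_apply]
  ext <;> simp [e, hl]

open Polynomial in
theorem not_eventually_pow_eq_sum {b : ℕ} (c : Fin b → ℝ) :
    ¬∀ᶠ s in 𝓝 (0 : ℝ), s ^ b - ∑ i, c i * s ^ (i : ℕ) = 0 := by
  intro hzero
  let P : ℝ[X] := X ^ b - ∑ i : Fin b, C (c i) * X ^ (i : ℕ)
  have hmonic : P.Monic := monic_X_pow_sub (degree_sum_fin_lt c)
  have hroot : ∀ᶠ s in 𝓝 (0 : ℝ), P.IsRoot s := by
    simpa [P, eval_finsetSum] using hzero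
  exact hmonic.ne_zero (eq_zero_of_infinite_isRoot P (infinite_of_mem_nhds 0 hroot))

namespace AnalyticGerm

open ContinuousLinearMap (fst snd toSpanSingleton)

variable {E W : Type*} [NormedAddCommGroup E] [NormedSpace ℝ E] [NormedAddCommGroup W]
  [NormedSpace ℝ W] (e : E ≃L[ℝ] W × ℝ)

/-- The germs of functions of the first component of `e : E ≃L[ℝ] W × ℝ`. -/
noncomputable def ofFst : AnalyticGerm W →+* AnalyticGerm E :=
  pullback (fst ℝ W ℝ ∘L (e : E →L[ℝ] W × ℝ))

/-- The germ of the second component of `e : E ≃L[ℝ] W × ℝ`. -/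
noncomputable def lastCoord : AnalyticGerm E :=
  linear (snd ℝ W ℝ ∘L (e : E →L[ℝ] W × ℝ))

/-- The restriction of germs to the line on which the first component of `e : E ≃L[ℝ] W × ℝ`
vanishes. -/
noncomputable def restrictLine : AnalyticGerm E →+* AnalyticGerm ℝ :=
  pullback (toSpanSingleton ℝ (e.symm (0, 1)))

/-- The polynomials in the last coordinate whose coefficients are germs in the other ones. -/
noncomputable def polynomialGerms : Subring (AnalyticGerm E) :=
  Subring.closure (Set.range (ofFst e) ∪ {lastCoord e})

variable {e}

theorem sum_mem_polynomialGerms {b : ℕ} (c : Fin b → AnalyticGerm W) :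
    ∑ i, ofFst e (c i) * lastCoord e ^ (i : ℕ) ∈ polynomialGerms e :=
  sum_mem fun i _ ↦ mul_mem (Subring.subset_closure (.inl ⟨c i, rfl⟩))
    (pow_mem (Subring.subset_closure (.inr rfl)) _)

theorem exists_eq_mul_add_sum [FiniteDimensional ℝ W] {h : AnalyticGerm E}
    (hh : restrictLine e h ≠ 0) :
    ∃ b : ℕ, ∀ r : AnalyticGerm E, ∃ (q : AnalyticGerm E) (c : Fin b → AnalyticGerm W),
      r = q * h + ∑ i, ofFst e (c i) * lastCoord e ^ (i : ℕ) := by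
  obtain ⟨h, rfl⟩ := mk_surjective h
  have hne : ¬∀ᶠ s : ℝ in 𝓝 0, h.1 (e.symm (0, s)) = 0 := by
    simpa [restrictLine, pullback_mk, mk_eq_zero_iff, compLinear, ← map_smul] using hh
  obtain ⟨b, hb⟩ := weierstrass_division (compLinear (e.symm : W × ℝ →L[ℝ] E) h).2 hne
  refine ⟨b, mk_surjective.forall.mpr fun r ↦ ?_⟩
  obtain ⟨q, c, hq, hc, hdiv⟩ := hb _ (compLinear (e.symm : W × ℝ →L[ℝ] E) r).2
  refine ⟨mk (compLinear (e : E →L[ℝ] W × ℝ) ⟨q, hq⟩), fun i ↦ mk ⟨c i, hc i⟩, ?_⟩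
  simp only [ofFst, lastCoord, linear, pullback_mk, ← map_pow, ← map_mul, ← map_sum, ← map_add,
    mk_eq_mk_iff]
  filter_upwards [(e.continuous.tendsto' 0 0 (map_zero e)).eventually hdiv] with z hz
  simpa [compLinear] using hz

theorem restrictLine_pow_sub_sum_ne_zero {b : ℕ} (c : Fin b → AnalyticGerm W) :
    restrictLine e (lastCoord e ^ b - ∑ i, ofFst e (c i) * lastCoord e ^ (i : ℕ)) ≠ 0 := by
  choose f hf using fun i ↦ mk_surjective (c i)
  simp only [← hf, restrictLine, ofFst, lastCoord, linear, pullback_mk, ← map_pow, ← map_mul,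
    ← map_sum, ← map_sub, ne_eq, mk_eq_zero_iff]
  simpa [compLinear] using not_eventually_pow_eq_sum fun i ↦ (f i).1 0

theorem exists_mem_polynomialGerms [FiniteDimensional ℝ W] {p : Ideal (AnalyticGerm E)}
    {h : AnalyticGerm E} (hp : h ∈ p) (hh : restrictLine e h ≠ 0) :
    ∃ P ∈ p, P ∈ polynomialGerms e ∧ restrictLine e P ≠ 0 := by
  obtain ⟨b, hb⟩ := exists_eq_mul_add_sum hh
  obtain ⟨q, c, hqc⟩ := hb (lastCoord e ^ b)
  refine ⟨_, ?_, ?_, restrictLine_pow_sub_sum_ne_zero c⟩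
  · rw [hqc, add_sub_cancel_right]
    exact p.mul_mem_left q hp
  · exact sub_mem (pow_mem (Subring.subset_closure (.inr rfl)) b) (sum_mem_polynomialGerms c)

theorem exists_sub_mem_span_singleton_pow [FiniteDimensional ℝ W] {P : AnalyticGerm E}
    (hP : P ∈ polynomialGerms e) (hne : restrictLine e P ≠ 0) (n : ℕ) (r : AnalyticGerm E) :
    ∃ a ∈ polynomialGerms e, r - a ∈ Ideal.span {P} ^ n := by
  obtain ⟨b, hb⟩ := exists_eq_mul_add_sum hne
  induction n generalizing r with
  | zero => exact ⟨0, zero_mem _, by simp⟩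
  | succ n ih =>
    obtain ⟨q, c, hqc⟩ := hb r
    obtain ⟨a, ha, hqa⟩ := ih q
    refine ⟨a * P + ∑ i, ofFst e (c i) * lastCoord e ^ (i : ℕ),
      add_mem (mul_mem ha hP) (sum_mem_polynomialGerms c), ?_⟩
    rw [hqc, add_sub_add_right_eq_sub, ← sub_mul, pow_succ]
    exact Ideal.mul_mem_mul hqa (Ideal.mem_span_singleton_self P)

theorem exists_isNoetherFrame_of_ofFst [FiniteDimensional ℝ W] {p : Ideal (AnalyticGerm E)}
    {h : AnalyticGerm E} (hp : h ∈ p) (hh : restrictLine e h ≠ 0) {m : ℕ} {v' : Fin m → W}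
    {x' : Fin m → AnalyticGerm W} {S' : Subring (AnalyticGerm W)} {I' : Ideal (AnalyticGerm W)}
    (hframe : IsNoetherFrame (p.comap (ofFst e)) (derivation ∘ v') x' S' I') :
    ∃ (v : Fin (m + 1) → E) (x : Fin (m + 1) → AnalyticGerm E) (S : Subring (AnalyticGerm E))
      (I : Ideal (AnalyticGerm E)), IsNoetherFrame p (derivation ∘ v) x S I := by
  obtain ⟨P, hPp, hP, hne⟩ := exists_mem_polynomialGerms hp hh
  refine ⟨Fin.cons (e.symm (0, 1)) fun i ↦ e.symm (v' i, 0), _, _, _, hframe.cons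
    (t := lastCoord e) (fun a ↦ ?_) ?_ (fun i a ↦ ?_) (fun i ↦ ?_)
    (Submodule.fg_span_singleton P) ((Ideal.span_singleton_le_iff_mem p).mpr hPp)
    (exists_sub_mem_span_singleton_pow hP hne)⟩
  · simp [ofFst, derivation_pullback, derivation_zero]
  · simp [lastCoord, derivation_linear]
  · simp [ofFst, derivation_pullback]
  · simp [lastCoord, derivation_linear]

theorem exists_isNoetherFrame {E : Type*} [NormedAddCommGroup E] [NormedSpace ℝ E]
    [FiniteDimensional ℝ E] {p : Ideal (AnalyticGerm E)} (hp : p ≠ ⊤) :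
    ∃ (m : ℕ) (v : Fin m → E) (x : Fin m → AnalyticGerm E) (S : Subring (AnalyticGerm E))
      (I : Ideal (AnalyticGerm E)), IsNoetherFrame p (derivation ∘ v) x S I := by
  induction hn : Module.finrank ℝ E using Nat.strong_induction_on generalizing E with
  | _ n ih =>
  obtain rfl | hbot := eq_or_ne p ⊥
  · exact ⟨0, Fin.elim0, Fin.elim0, ⊤, ⊥, .bot⟩
  obtain ⟨h, hh, h0⟩ := Submodule.exists_mem_ne_zero_of_ne_bot hbot
  obtain ⟨v, hv, hvh⟩ := exists_pullback_toSpanSingleton_ne_zero h0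
    fun hu ↦ hp (p.eq_top_of_isUnit_mem hh hu)
  obtain ⟨l, e, rfl⟩ := exists_continuousLinearEquiv_ker_prod hv
  have hlt : Module.finrank ℝ l.ker < n := by
    rw [← hn, e.toLinearEquiv.finrank_eq, Module.finrank_prod, Module.finrank_self]
    exact Nat.lt_succ_self _
  obtain ⟨m, v', x', S', I', hframe⟩ := ih _ hlt (Ideal.comap_ne_top (ofFst e) hp) rfl
  exact ⟨m + 1, exists_isNoetherFrame_of_ofFst hh hvh hframe⟩

end AnalyticGerm

/-! ### The inequality -/

section PowerBounded

variable {K : Type*} [Field K] [LinearOrder K] [IsStrictOrderedRing K] {φ : K}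

theorem abs_mul_pow_mul_le_one {a b c : K} (ha : ∀ n : ℕ, |a| ^ n * |c| ≤ 1)
    (hb : ∀ n : ℕ, |b| ^ n * |c| ≤ 1) (n : ℕ) : |a * b| ^ n * |c| ≤ 1 := by
  have hsq : (|a * b| ^ n * |c|) ^ 2 = (|a| ^ (2 * n) * |c|) * (|b| ^ (2 * n) * |c|) := by
    rw [abs_mul]
    ring
  rw [← sq_le_one_iff₀ (by positivity), hsq]
  exact mul_le_one₀ (ha _) (by positivity) (hb _)

/-- For an infinitesimal `φ`, the valuation ring of the elements of the ordered field `K` all of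
whose powers are at most `|φ|⁻¹` in absolute value. It serves to make `φ` divide a power of each
nonunit. -/
def powerBounded (φ : K) (hφ : ∀ n : ℕ, 2 ^ n * |φ| ≤ 1) : ValuationSubring K :=
  have hφ1 : |φ| ≤ 1 := by simpa using hφ 0
  have hmono {a b : K} (hab : |a| ≤ |b|) (hb : ∀ n : ℕ, |b| ^ n * |φ| ≤ 1) (n : ℕ) :
      |a| ^ n * |φ| ≤ 1 := le_trans (by gcongr) (hb n)
  have hone {a : K} (ha : |a| ≤ 1) (n : ℕ) : |a| ^ n * |φ| ≤ 1 :=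
    mul_le_one₀ (pow_le_one₀ (abs_nonneg a) ha) (abs_nonneg φ) hφ1
  have hdouble {a b c : K} (ha : |a| ≤ |c|) (hb : |b| ≤ |c|) (hc : ∀ n : ℕ, |c| ^ n * |φ| ≤ 1) :
      ∀ n : ℕ, |a + b| ^ n * |φ| ≤ 1 :=
    hmono (b := 2 * c) (by rw [abs_mul, abs_two]; linarith [abs_add_le a b])
      (abs_mul_pow_mul_le_one (by simpa using hφ) hc)
  { carrier := {z | ∀ n : ℕ, |z| ^ n * |φ| ≤ 1}
    mul_mem' := abs_mul_pow_mul_le_one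
    one_mem' := hone (by simp)
    zero_mem' := hone (by simp)
    neg_mem' := fun {a} ha ↦ by simpa using ha
    add_mem' := fun {a b} ha hb ↦
      (le_total |a| |b|).elim (fun h ↦ hdouble h le_rfl hb) fun h ↦ hdouble le_rfl h ha
    mem_or_inv_mem' := fun a ↦ (le_total |a| 1).imp hone fun h ↦
      hone (by rw [abs_inv]; exact inv_le_one_of_one_le₀ h) }

namespace powerBounded

variable {hφ : ∀ n : ℕ, 2 ^ n * |φ| ≤ 1}

theorem mem_iff {z : K} : z ∈ powerBounded φ hφ ↔ ∀ n : ℕ, |z| ^ n * |φ| ≤ 1 :=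
  Iff.rfl

theorem mem_of_abs_le {z w : K} (hw : w ∈ powerBounded φ hφ) (hzw : |z| ≤ |w|) :
    z ∈ powerBounded φ hφ :=
  fun n ↦ le_trans (by gcongr) (hw n)

theorem dvd_of_div_mem (hφ0 : φ ≠ 0) {a z : powerBounded φ hφ} (ha : (a : K) = φ)
    (hz : (z : K) / φ ∈ powerBounded φ hφ) : a ∣ z :=
  ⟨⟨_, hz⟩, Subtype.ext (by simp [ha, mul_div_cancel₀ _ hφ0])⟩

theorem not_isUnit (hφ0 : φ ≠ 0) {a : powerBounded φ hφ} (ha : (a : K) = φ) : ¬IsUnit a := by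
  rintro ⟨u, rfl⟩
  have hpos : 0 < |φ| := abs_pos.mpr hφ0
  have hinv : ((↑u⁻¹ : powerBounded φ hφ) : K) = φ⁻¹ := by
    have hmul : ((u : powerBounded φ hφ) : K) * ((↑u⁻¹ : powerBounded φ hφ) : K) = 1 :=
      congrArg Subtype.val u.mul_inv
    rw [ha] at hmul
    exact (inv_eq_of_mul_eq_one_right hmul).symm
  have hsq := mem_iff.mp (↑u⁻¹ : powerBounded φ hφ).2 2
  rw [hinv, abs_inv, pow_two, mul_assoc, inv_mul_cancel₀ hpos.ne', mul_one,
    inv_le_one₀ hpos] at hsq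
  linarith [hφ 1]

theorem exists_dvd_pow (hφ0 : φ ≠ 0) {a z : powerBounded φ hφ} (ha : (a : K) = φ)
    (hz : z ∈ IsLocalRing.maximalIdeal (powerBounded φ hφ)) : ∃ n : ℕ, a ∣ z ^ n := by
  obtain rfl | hz0 := eq_or_ne z 0
  · exact ⟨1, by simp⟩
  have hzK : (z : K) ≠ 0 := fun h ↦ hz0 (Subtype.ext h)
  have hinv : (z : K)⁻¹ ∉ powerBounded φ hφ := fun h ↦
    hz (IsUnit.of_mul_eq_one ⟨_, h⟩ (Subtype.ext (mul_inv_cancel₀ hzK)))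
  rw [mem_iff, not_forall] at hinv
  obtain ⟨n, hn⟩ := hinv
  refine ⟨n, dvd_of_div_mem hφ0 ha (mem_of_abs_le (one_mem _) ?_)⟩
  rw [not_le, abs_inv, inv_pow, inv_mul_eq_div, one_lt_div (by positivity)] at hn
  simpa [abs_div, div_le_one (abs_pos.mpr hφ0)] using hn.le

end powerBounded

end PowerBounded

section Lojasiewicz

open Filter

theorem powerBounded.coe_mem_of_eventually_abs_le {α : Type*} {L : Ultrafilter α}
    {φ : Germ (L : Filter α) ℝ} {hφ : ∀ n : ℕ, 2 ^ n * |φ| ≤ 1} {h : α → ℝ} {C : ℝ}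
    (hC : ∀ᶠ y in L, |h y| ≤ C) :
    (h : Germ (L : Filter α) ℝ) ∈ powerBounded φ hφ := by
  obtain ⟨N, hN⟩ := exists_nat_ge C
  refine powerBounded.mem_of_abs_le (natCast_mem _ N) ?_
  rw [Nat.abs_cast, Germ.abs_def]
  refine Germ.coe_le.mpr ?_
  filter_upwards [hC] with y hy
  exact hy.trans hN

variable {E : Type*} [NormedAddCommGroup E] [NormedSpace ℝ E]

theorem AnalyticGerm.compTendsto_mem_powerBounded {α : Type*} {L : Ultrafilter α}
    {φ : Germ (L : Filter α) ℝ} {hφ : ∀ n : ℕ, 2 ^ n * |φ| ≤ 1} {y : α → E}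
    (hy : Tendsto y L (𝓝 0)) (γ : AnalyticGerm E) :
    AnalyticGerm.compTendsto y hy γ ∈ powerBounded φ hφ := by
  obtain ⟨h, rfl⟩ := AnalyticGerm.mk_surjective γ
  have habs : Tendsto (fun k ↦ |h.1 (y k)|) L (𝓝 |h.1 0|) :=
    (h.2.continuousAt.tendsto.comp hy).abs
  exact powerBounded.coe_mem_of_eventually_abs_le (habs.eventually_le_const (lt_add_one _))

theorem two_pow_mul_abs_coe_le_one {α : Type*} {L : Ultrafilter α} {f : α → ℝ}
    (hf : Tendsto f L (𝓝 0)) (n : ℕ) : 2 ^ n * |(f : Germ (L : Filter α) ℝ)| ≤ 1 := by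
  have hlim : Tendsto (fun y ↦ 2 ^ n * |f y|) L (𝓝 0) := by
    simpa using hf.abs.const_mul (2 ^ n)
  rw [Germ.abs_def]
  exact Germ.coe_le.mpr (hlim.eventually_le_const one_pos)

theorem coe_fderiv_div_mem_powerBounded {L : Ultrafilter E} {f : E → ℝ}
    {hφ : ∀ n : ℕ, 2 ^ n * |(f : Germ (L : Filter E) ℝ)| ≤ 1}
    (hne : ∀ᶠ y in L, f y ≠ 0)
    (hsmall : ∀ n : ℕ, ∀ᶠ y in L, ‖fderiv ℝ f y‖ ^ (n + 1) ≤ |f y| ^ n) (v : E) :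
    ((fun y ↦ fderiv ℝ f y v / f y : E → ℝ) : Germ (L : Filter E) ℝ) ∈
      powerBounded (f : Germ (L : Filter E) ℝ) hφ := by
  have hquot : ((fun y ↦ ‖fderiv ℝ f y‖ / f y : E → ℝ) : Germ (L : Filter E) ℝ) ∈
      powerBounded (f : Germ (L : Filter E) ℝ) hφ := by
    rintro (_ | n)
    · simpa using hφ 0
    rw [Germ.abs_def, Germ.abs_def]
    refine Germ.coe_le.mpr ?_
    filter_upwards [hne, hsmall n] with y hy hn
    have hpos : 0 < |f y| := abs_pos.mpr hy
    calc |‖fderiv ℝ f y‖ / f y| ^ (n + 1) * |f y| = ‖fderiv ℝ f y‖ ^ (n + 1) / |f y| ^ n := by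
          rw [abs_div, abs_norm, div_pow]
          field_simp
          ring
      _ ≤ 1 := (div_le_one (pow_pos hpos n)).mpr hn
  have hnorm : ((fun _ ↦ ‖v‖ : E → ℝ) : Germ (L : Filter E) ℝ) ∈
      powerBounded (f : Germ (L : Filter E) ℝ) hφ :=
    powerBounded.coe_mem_of_eventually_abs_le (.of_forall fun _ ↦ (abs_norm v).le)
  refine powerBounded.mem_of_abs_le (mul_mem hquot hnorm) ?_
  rw [Germ.abs_def, Germ.abs_def]
  refine Germ.coe_le.mpr (.of_forall fun y ↦ ?_)
  calc |fderiv ℝ f y v / f y| ≤ ‖fderiv ℝ f y‖ * ‖v‖ / |f y| := by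
        rw [abs_div]
        gcongr
        exact (fderiv ℝ f y).le_opNorm v
    _ = |‖fderiv ℝ f y‖ / f y * ‖v‖| := by
        rw [abs_mul, abs_div, abs_norm, abs_norm, div_mul_eq_mul_div]

theorem exists_eventually_ultrafilter_abs_pow_lt [FiniteDimensional ℝ E] {f : E → ℝ}
    (hf : AnalyticAt ℝ f 0) (hf0 : f 0 = 0) {L : Ultrafilter E} (hL : (L : Filter E) ≤ 𝓝 0)
    (hne : ∀ᶠ y in L, f y ≠ 0) :
    ∃ n : ℕ, ∀ᶠ y in L, |f y| ^ n < ‖fderiv ℝ f y‖ ^ (n + 1) := by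
  by_contra hlarge
  simp only [not_exists, ← Ultrafilter.eventually_not, not_lt] at hlarge
  let φ : Germ (L : Filter E) ℝ := f
  have hφ : ∀ n : ℕ, 2 ^ n * |φ| ≤ 1 :=
    two_pow_mul_abs_coe_le_one (hf0 ▸ hf.continuousAt.tendsto.mono_left hL)
  have hφ0 : φ ≠ 0 := fun h ↦
    (hne.and (Germ.coe_eq.mp h)).exists.elim fun _ hy ↦ hy.1 hy.2
  let Φ : AnalyticGerm E →+* powerBounded φ hφ :=
    (AnalyticGerm.compTendsto id hL).codRestrict _ (AnalyticGerm.compTendsto_mem_powerBounded hL)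
  let γ : AnalyticGerm E := AnalyticGerm.mk ⟨f, hf⟩
  have hdvd (v : E) : Φ γ ∣ Φ (AnalyticGerm.derivation v γ) := by
    rw [AnalyticGerm.derivation_mk]
    exact powerBounded.dvd_of_div_mem hφ0 rfl (coe_fderiv_div_mem_powerBounded hne hlarge v)
  have : CharZero (powerBounded φ hφ) :=
    charZero_of_injective_algebraMap (FaithfulSMul.algebraMap_injective ℤ _)
  obtain ⟨m, v, x, S, I, hframe⟩ := AnalyticGerm.exists_isNoetherFrame
    (Ideal.comap_ne_top Φ (IsLocalRing.maximalIdeal.isMaximal (powerBounded φ hφ)).ne_top)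
  exact powerBounded.not_isUnit hφ0 (a := Φ γ) rfl <|
    hframe.isUnit_of_dvd_derivation (fun h ↦ hφ0 (congrArg Subtype.val h))
      (fun _ ↦ powerBounded.exists_dvd_pow hφ0 rfl) fun j ↦ hdvd (v j)

theorem pow_succ_le_pow_succ_succ {a b : ℝ} (ha : 0 ≤ a) (ha1 : a ≤ 1) (hb : 0 ≤ b) {n : ℕ}
    (h : a ^ n ≤ b ^ (n + 1)) : a ^ (n + 1) ≤ b ^ (n + 2) := by
  refine le_of_pow_le_pow_left₀ n.succ_ne_zero (by positivity) ?_
  calc (a ^ (n + 1)) ^ (n + 1) = (a ^ n) ^ (n + 2) * a := by ring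
    _ ≤ (b ^ (n + 1)) ^ (n + 2) * 1 := by gcongr
    _ = (b ^ (n + 2)) ^ (n + 1) := by ring

theorem exists_eventually_abs_pow_le [FiniteDimensional ℝ E] {f : E → ℝ}
    (hf : AnalyticAt ℝ f 0) (hf0 : f 0 = 0) :
    ∃ n : ℕ, ∀ᶠ y in 𝓝 0, |f y| ^ n ≤ ‖fderiv ℝ f y‖ ^ (n + 1) := by
  by_contra hlarge
  simp only [not_exists, not_eventually, not_le] at hlarge
  have hlt : ∀ᶠ y in 𝓝 0, |f y| < 1 :=
    hf.continuousAt.abs.eventually_lt_const (by simp [hf0])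
  let t (n : ℕ) : Set E := {y | |f y| < 1 ∧ ‖fderiv ℝ f y‖ ^ (n + 1) < |f y| ^ n}
  have ht : Antitone t := antitone_nat_of_succ_le fun n y hy ↦ ⟨hy.1, not_le.mp fun h ↦
    hy.2.not_ge (pow_succ_le_pow_succ_succ (abs_nonneg _) hy.1.le (norm_nonneg _) h)⟩
  have hanti : Antitone fun n ↦ 𝓝 0 ⊓ 𝓟 (t n) := fun _ _ hmn ↦
    inf_le_inf_left _ (principal_mono.mpr (ht hmn))
  have (n : ℕ) : (𝓝 0 ⊓ 𝓟 (t n)).NeBot :=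
    frequently_mem_iff_neBot.mp (hlt.and_frequently (hlarge n))
  have : (⨅ n, 𝓝 0 ⊓ 𝓟 (t n)).NeBot :=
    iInf_neBot_of_directed' hanti.directed_ge this
  let L := Ultrafilter.of (⨅ n, 𝓝 0 ⊓ 𝓟 (t n))
  have hL (n : ℕ) : (L : Filter E) ≤ 𝓝 0 ⊓ 𝓟 (t n) := (Ultrafilter.of_le _).trans (iInf_le _ n)
  have hmem (n : ℕ) : ∀ᶠ y in L, y ∈ t n := le_principal_iff.mp ((hL n).trans inf_le_right)
  obtain ⟨n, hn⟩ := exists_eventually_ultrafilter_abs_pow_lt hf hf0 ((hL 0).trans inf_le_left)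
    ((hmem 1).mono fun y hy hy0 ↦ by
      have := hy.2
      rw [hy0, abs_zero, pow_one] at this
      exact this.not_ge (by positivity))
  obtain ⟨y, hy, hyt⟩ := (hn.and (hmem n)).exists
  exact hy.not_gt hyt.2

theorem lojasiewicz_gradient_inequality_general [FiniteDimensional ℝ E] {g : E → ℝ} {x : E}
    (hg : AnalyticAt ℝ g x) :
    ∃ θ : ℝ, 1 / 2 ≤ θ ∧ θ < 1 ∧ ∀ᶠ y in 𝓝 x, |g x - g y| ^ θ ≤ ‖fderiv ℝ g y‖ := by
  let f (z : E) : ℝ := g (x + z) - g x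
  have hf : AnalyticAt ℝ f 0 :=
    (hg.comp_of_eq (analyticAt_const.add analyticAt_id) (add_zero x)).sub analyticAt_const
  have hf0 : f 0 = 0 := by simp [f]
  obtain ⟨n, hn⟩ := exists_eventually_abs_pow_le hf hf0
  have hlt : ∀ᶠ z in 𝓝 0, |f z| < 1 :=
    hf.continuousAt.abs.eventually_lt_const (by simp [hf0])
  have : (0 : ℝ) ≤ n := n.cast_nonneg
  refine ⟨(n + 1) / (n + 2), ?_, ?_, ?_⟩
  · rw [div_le_div_iff₀ two_pos (by positivity)]
    linarith
  · rw [div_lt_one (by positivity)]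
    linarith
  have hsub : Tendsto (fun y ↦ y - x) (𝓝 x) (𝓝 0) := tendsto_sub_nhds_zero_iff.mpr tendsto_id
  filter_upwards [hsub.eventually hn, hsub.eventually hlt] with y hy hy1
  have hpow := pow_succ_le_pow_succ_succ (abs_nonneg _) hy1.le (norm_nonneg _) hy
  have hfy : f (y - x) = g y - g x := by simp [f]
  have hderiv : fderiv ℝ f (y - x) = fderiv ℝ g y := by
    rw [fderiv_sub_const, fderiv_comp_add_left, add_sub_cancel]
  rw [hfy, hderiv, abs_sub_comm] at hpow
  refine le_of_pow_le_pow_left₀ (n + 1).succ_ne_zero (norm_nonneg _) (le_trans (le_of_eq ?_) hpow)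
  rw [← Real.rpow_mul_natCast (abs_nonneg _), ← Real.rpow_natCast]
  push_cast
  congr 1
  field_simp
  ring

end Lojasiewicz

/-- Łojasiewicz gradient inequality for a real-analytic function near a critical point. -/
theorem lojasiewicz_gradient_inequality
    {E : Type*} [NormedAddCommGroup E] [InnerProductSpace ℝ E] [FiniteDimensional ℝ E]
    (U : Set E) (hU : IsOpen U) (g : E → ℝ) (hg : AnalyticOnNhd ℝ g U)
    (x : E) (hx : x ∈ U) (hcrit : gradient g x = 0) :
    ∃ V ∈ 𝓝 x, V ⊆ U ∧ ∃ a : ℝ, 0 < a ∧ ∃ θ : ℝ, 1/2 ≤ θ ∧ θ < 1 ∧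
      ∀ y ∈ V, a * |g x - g y| ^ θ ≤ ‖gradient g y‖ := by
  obtain ⟨θ, hθ, hθ1, hV⟩ := lojasiewicz_gradient_inequality_general (hg x hx)
  refine ⟨{y | |g x - g y| ^ θ ≤ ‖fderiv ℝ g y‖} ∩ U, Filter.inter_mem hV (hU.mem_nhds hx),
    Set.inter_subset_right, 1, one_pos, θ, hθ, hθ1, fun y hy ↦ ?_⟩
  rw [one_mul, gradient, LinearIsometryEquiv.norm_map]
  exact hy.1
end
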